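/- arXiv:2510.06613 — 4 statements merged into one kernel-verified Lean document; each statement's English description precedes it below -/
import Mathlib

section
/- Let n ≥ 5 be an integer and let p ≥ 1 and q ≥ 1 be real numbers satisfying 1/(p+1) + 1/(q+1) ≥ 1 − 2/n + 4/n². Then there is no pair (u, v) of positive C² functions on ℝ^n satisfying the Lane–Emden system −Δu = v^p and −Δv = u^q on all of ℝ^n. -/
open MeasureTheory Real
open scoped InnerProductSpace

/-- The Laplacian of a function `f : ℝⁿ → ℝ`, as the sum of its second partial
derivatives. -/
noncomputable def lap {n : ℕ} (f : EuclideanSpace ℝ (Fin n) → ℝ)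
    (x : EuclideanSpace ℝ (Fin n)) : ℝ :=
  ∑ i : Fin n, fderiv ℝ (fun y => fderiv ℝ f y (EuclideanSpace.single i 1)) x
    (EuclideanSpace.single i 1)


abbrev EE (n : ℕ) := EuclideanSpace ℝ (Fin n)

lemma fd_line {n : ℕ} {f : EE n → ℝ} {x : EE n} (hf : ContDiffAt ℝ 2 f x) (e : EE n) :
    (∀ᶠ τ in nhds (0:ℝ), HasDerivAt (fun τ : ℝ => f (x + τ • e)) (fderiv ℝ f (x + τ • e) e) τ) ∧
    HasDerivAt (fun τ : ℝ => fderiv ℝ f (x + τ • e) e)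
      (fderiv ℝ (fun y => fderiv ℝ f y e) x e) 0 := by
  have hl : ∀ τ : ℝ, HasDerivAt (fun τ : ℝ => x + τ • e) e τ := by
    intro τ
    simpa using ((hasDerivAt_id τ).smul_const e).const_add x
  constructor
  · have h1 : ∀ᶠ y in nhds x, ContDiffAt ℝ 2 f y := hf.eventually (by simp)
    have hc : Filter.Tendsto (fun τ : ℝ => x + τ • e) (nhds 0) (nhds x) := by
      have := (hl 0).continuousAt.tendsto
      simpa using this
    filter_upwards [hc.eventually h1] with τ hτ
    exact (hτ.differentiableAt (by norm_num)).hasFDerivAt.comp_hasDerivAt τ (hl τ)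
  · have h2 : ContDiffAt ℝ 1 (fderiv ℝ f) x := hf.fderiv_right (by norm_num)
    have h3 : DifferentiableAt ℝ (fun y => fderiv ℝ f y e) x :=
      (h2.differentiableAt (by norm_num)).clm_apply (differentiableAt_const e)
    have h4 : HasFDerivAt (fun y => fderiv ℝ f y e) (fderiv ℝ (fun y => fderiv ℝ f y e) x)
      (x + (0:ℝ) • e) := by simpa using h3.hasFDerivAt
    exact h4.comp_hasDerivAt (0:ℝ) (hl 0)

lemma dd_line {n : ℕ} {f : EE n → ℝ} {x : EE n} (hf : ContDiffAt ℝ 2 f x) (e : EE n) :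
    deriv (deriv (fun τ : ℝ => f (x + τ • e))) 0 = fderiv ℝ (fun y => fderiv ℝ f y e) x e := by
  obtain ⟨h1, h2⟩ := fd_line hf e
  have : deriv (fun τ : ℝ => f (x + τ • e)) =ᶠ[nhds 0] (fun τ : ℝ => fderiv ℝ f (x + τ • e) e) := by
    filter_upwards [h1] with τ h using h.deriv
  rw [this.deriv_eq, h2.deriv]

lemma lap_eq {n : ℕ} {f : EE n → ℝ} {x : EE n} (hf : ContDiffAt ℝ 2 f x) :
    lap f x = ∑ i : Fin n, deriv (deriv (fun τ : ℝ => f (x + τ • EuclideanSpace.single i (1:ℝ)))) 0 := by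
  unfold lap
  exact Finset.sum_congr rfl fun i _ => (dd_line hf _).symm

lemma lap_nonneg_of_min {n : ℕ} {f : EE n → ℝ} {x : EE n} (hf : ContDiffAt ℝ 2 f x)
    (hm : IsLocalMin f x) : 0 ≤ lap f x := by
  rw [lap_eq hf]
  refine Finset.sum_nonneg fun i _ => ?_
  set e : EE n := EuclideanSpace.single i (1:ℝ)
  set g : ℝ → ℝ := fun τ : ℝ => f (x + τ • e) with hg
  by_contra hneg
  push Not at hneg
  have hc : Filter.Tendsto (fun τ : ℝ => x + τ • e) (nhds 0) (nhds x) := by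
    have : ContinuousAt (fun τ : ℝ => x + τ • e) 0 := by fun_prop
    simpa using this.tendsto
  have hmin : IsLocalMin g 0 := by
    have := hc.eventually hm
    filter_upwards [this] with τ hτ
    simpa [hg] using hτ
  have hcont : ContinuousAt g 0 := (fd_line hf e).1.self_of_nhds.continuousAt
  have hmax := isLocalMax_of_deriv_deriv_neg hneg hmin.deriv_eq_zero hcont
  have hconst : g =ᶠ[nhds 0] fun _ => g 0 := by
    filter_upwards [hmin, hmax] with τ h1 h2 using le_antisymm h2 h1
  have h0 : deriv (deriv g) 0 = 0 := by
    have := hconst.deriv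
    rw [this.deriv_eq]
    simp
  linarith

lemma lap_sub {n : ℕ} {f g : EE n → ℝ} {x : EE n} (hf : ContDiffAt ℝ 2 f x)
    (hg : ContDiffAt ℝ 2 g x) : lap (fun y => f y - g y) x = lap f x - lap g x := by
  unfold lap
  rw [← Finset.sum_sub_distrib]
  refine Finset.sum_congr rfl fun i _ => ?_
  set e : EE n := EuclideanSpace.single i (1:ℝ)
  have aux : ∀ {f : EE n → ℝ}, ContDiffAt ℝ 2 f x → DifferentiableAt ℝ (fun y => fderiv ℝ f y e) x := by
    intro f hf
    have h2 : ContDiffAt ℝ 1 (fderiv ℝ f) x := hf.fderiv_right (by norm_num)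
    exact (h2.differentiableAt (by norm_num)).clm_apply (differentiableAt_const e)
  have : (fun y => fderiv ℝ (fun y => f y - g y) y e) =ᶠ[nhds x]
      fun y => fderiv ℝ f y e - fderiv ℝ g y e := by
    filter_upwards [hf.eventually (by simp), hg.eventually (by simp)] with y h1 h2
    rw [fderiv_fun_sub (h1.differentiableAt (by norm_num)) (h2.differentiableAt (by norm_num))]
    rfl
  rw [this.fderiv_eq, fderiv_fun_sub (aux hf) (aux hg)]
  rfl

lemma lap_const_mul {n : ℕ} {f : EE n → ℝ} {x : EE n} (c d : ℝ) (hf : ContDiffAt ℝ 2 f x) :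
    lap (fun y => c * f y + d) x = c * lap f x := by
  unfold lap
  rw [Finset.mul_sum]
  refine Finset.sum_congr rfl fun i _ => ?_
  set e : EE n := EuclideanSpace.single i (1:ℝ)
  have h2 : ContDiffAt ℝ 1 (fderiv ℝ f) x := hf.fderiv_right (by norm_num)
  have h3 := (h2.differentiableAt (by norm_num)).clm_apply (differentiableAt_const e)
  have : (fun y => fderiv ℝ (fun y => c * f y + d) y e) =ᶠ[nhds x]
      fun y => c * fderiv ℝ f y e := by
    filter_upwards [hf.eventually (by simp)] with y h1
    rw [fderiv_add_const, fderiv_const_mul (h1.differentiableAt (by norm_num))]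
    rfl
  rw [this.fderiv_eq, fderiv_const_mul h3]
  rfl

noncomputable def kel {n : ℕ} (A k : ℝ) (u : EE n → ℝ) (x : EE n) : ℝ :=
  (k / ‖x‖ ^ 2) ^ A * u ((k / ‖x‖ ^ 2) • x)

lemma kel_contDiffAt {n : ℕ} {A k : ℝ} {u : EE n → ℝ} (hu : ContDiff ℝ 2 u) (hk : 0 < k)
    {x : EE n} (hx : x ≠ 0) : ContDiffAt ℝ 2 (kel A k u) x := by
  have hn : ‖x‖ ^ 2 ≠ 0 := by positivity
  have h1 : ContDiffAt ℝ 2 (fun x : EE n => k / ‖x‖ ^ 2) x :=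
    contDiffAt_const.div (contDiff_norm_sq ℝ).contDiffAt hn
  have h2 : k / ‖x‖ ^ 2 ≠ 0 := by positivity
  exact (h1.rpow_const_of_ne h2).mul (hu.contDiffAt.comp x (h1.smul contDiffAt_id))


lemma kel_line {n : ℕ} {A k : ℝ} {u : EE n → ℝ} (hu : ContDiff ℝ 2 u) (hk : 0 < k)
    {x : EE n} (hx : x ≠ 0) {e : EE n} (he : ‖e‖ = 1) :
    deriv (deriv (fun τ : ℝ => kel A k u (x + τ • e))) 0 =
      (k / ‖x‖ ^ 2) ^ A * (
        -2 * A / ‖x‖ ^ 2 * u ((k / ‖x‖ ^ 2) • x)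
        - 2 * (k / ‖x‖ ^ 2) / ‖x‖ ^ 2 * fderiv ℝ u ((k / ‖x‖ ^ 2) • x) x
        + inner ℝ x e ^ 2 * ((4 * A * A + 4 * A) / (‖x‖ ^ 2) ^ 2 * u ((k / ‖x‖ ^ 2) • x)
          + (8 * A + 8) * (k / ‖x‖ ^ 2) / (‖x‖ ^ 2) ^ 2 * fderiv ℝ u ((k / ‖x‖ ^ 2) • x) x)
        - inner ℝ x e * fderiv ℝ u ((k / ‖x‖ ^ 2) • x) e * ((4 * A + 4) * (k / ‖x‖ ^ 2) / ‖x‖ ^ 2)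
        + (k / ‖x‖ ^ 2) ^ 2 * (fderiv ℝ (fderiv ℝ u) ((k / ‖x‖ ^ 2) • x) e e
          - 2 / ‖x‖ ^ 2 * (inner ℝ x e * fderiv ℝ (fderiv ℝ u) ((k / ‖x‖ ^ 2) • x) x e)
          - 2 / ‖x‖ ^ 2 * (inner ℝ x e * fderiv ℝ (fderiv ℝ u) ((k / ‖x‖ ^ 2) • x) e x)
          + 4 / (‖x‖ ^ 2) ^ 2 * (inner ℝ x e ^ 2 * fderiv ℝ (fderiv ℝ u) ((k / ‖x‖ ^ 2) • x) x x))) := by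
  have hX : ∀ τ : ℝ, HasDerivAt (fun τ : ℝ => x + τ • e) e τ := by
    intro τ
    simpa using ((hasDerivAt_id τ).smul_const e).const_add x
  have hσ : ∀ τ : ℝ, HasDerivAt (fun τ : ℝ => inner ℝ (x + τ • e) e) 1 τ := by
    intro τ
    have := (hX τ).inner ℝ (hasDerivAt_const τ e)
    simpa [he] using this
  have hs : ∀ τ : ℝ, HasDerivAt (fun τ : ℝ => ‖x + τ • e‖ ^ 2) (2 * inner ℝ (x + τ • e) e) τ := by
    intro τ
    exact (hX τ).norm_sq
  have hρ : ∀ τ : ℝ, x + τ • e ≠ 0 → HasDerivAt (fun τ : ℝ => k / ‖x + τ • e‖ ^ 2)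
      (-2 * (k / ‖x + τ • e‖ ^ 2) * inner ℝ (x + τ • e) e / ‖x + τ • e‖ ^ 2) τ := by
    intro τ hτ
    have hn : ‖x + τ • e‖ ≠ 0 := by simpa using hτ
    have := (hasDerivAt_const τ k).div (hs τ) (by positivity)
    refine this.congr_deriv ?_
    field_simp
    ring
  have hρA : ∀ τ : ℝ, x + τ • e ≠ 0 → HasDerivAt (fun τ : ℝ => (k / ‖x + τ • e‖ ^ 2) ^ A)
      ((k / ‖x + τ • e‖ ^ 2) ^ A * (-2 * A * inner ℝ (x + τ • e) e / ‖x + τ • e‖ ^ 2)) τ := by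
    intro τ hτ
    have hn : 0 < ‖x + τ • e‖ := by simpa using hτ
    have hpos : 0 < k / ‖x + τ • e‖ ^ 2 := by positivity
    have := (hρ τ hτ).rpow_const (p := A) (Or.inl hpos.ne')
    refine this.congr_deriv ?_
    rw [Real.rpow_sub_one hpos.ne']
    field_simp
  have hY : ∀ τ : ℝ, x + τ • e ≠ 0 → HasDerivAt (fun τ : ℝ => (k / ‖x + τ • e‖ ^ 2) • (x + τ • e))
      ((k / ‖x + τ • e‖ ^ 2) • e +
        (-2 * (k / ‖x + τ • e‖ ^ 2) * inner ℝ (x + τ • e) e / ‖x + τ • e‖ ^ 2) • (x + τ • e)) τ :=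
    fun τ hτ => (hρ τ hτ).smul (hX τ)
  have hud : Differentiable ℝ u := hu.differentiable (by norm_num)
  have hu1 : ContDiff ℝ 1 (fderiv ℝ u) := hu.fderiv_right (by norm_num)
  have hud2 : Differentiable ℝ (fderiv ℝ u) := hu1.differentiable (by norm_num)
  have hg : ∀ τ : ℝ, x + τ • e ≠ 0 → HasDerivAt (fun τ : ℝ => kel A k u (x + τ • e))
      ((k / ‖x + τ • e‖ ^ 2) ^ A * (-2 * A * inner ℝ (x + τ • e) e / ‖x + τ • e‖ ^ 2) *
        u ((k / ‖x + τ • e‖ ^ 2) • (x + τ • e)) + (k / ‖x + τ • e‖ ^ 2) ^ A *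
        fderiv ℝ u ((k / ‖x + τ • e‖ ^ 2) • (x + τ • e)) ((k / ‖x + τ • e‖ ^ 2) • e +
        (-2 * (k / ‖x + τ • e‖ ^ 2) * inner ℝ (x + τ • e) e / ‖x + τ • e‖ ^ 2) • (x + τ • e))) τ := by
    intro τ hτ
    exact (hρA τ hτ).mul ((hud _).hasFDerivAt.comp_hasDerivAt τ (hY τ hτ))
  have hne : ∀ᶠ τ in nhds (0:ℝ), x + τ • e ≠ 0 := by
    have : ContinuousAt (fun τ : ℝ => x + τ • e) 0 := (hX 0).continuousAt
    exact this.eventually_ne (by simpa using hx)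
  have hev : deriv (fun τ : ℝ => kel A k u (x + τ • e)) =ᶠ[nhds 0] (fun τ : ℝ =>
      (k / ‖x + τ • e‖ ^ 2) ^ A * (-2 * A * inner ℝ (x + τ • e) e / ‖x + τ • e‖ ^ 2) *
        u ((k / ‖x + τ • e‖ ^ 2) • (x + τ • e)) + (k / ‖x + τ • e‖ ^ 2) ^ A *
        fderiv ℝ u ((k / ‖x + τ • e‖ ^ 2) • (x + τ • e)) ((k / ‖x + τ • e‖ ^ 2) • e +
        (-2 * (k / ‖x + τ • e‖ ^ 2) * inner ℝ (x + τ • e) e / ‖x + τ • e‖ ^ 2) • (x + τ • e))) := by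
    filter_upwards [hne] with τ hτ using (hg τ hτ).deriv
  rw [hev.deriv_eq]
  have h0 : x + (0:ℝ) • e ≠ 0 := by simpa using hx
  have hn0 : ‖x + (0:ℝ) • e‖ ^ 2 ≠ 0 := by simpa using hx
  have hnx : 0 < ‖x‖ := by simpa using hx
  have hDu := (hud2 ((k / ‖x + (0:ℝ) • e‖ ^ 2) • (x + (0:ℝ) • e))).hasFDerivAt.comp_hasDerivAt 0 (hY 0 h0)
  have hU := (hud ((k / ‖x + (0:ℝ) • e‖ ^ 2) • (x + (0:ℝ) • e))).hasFDerivAt.comp_hasDerivAt 0 (hY 0 h0)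
  have hc : HasDerivAt (fun τ : ℝ => -2 * A * inner ℝ (x + τ • e) e / ‖x + τ • e‖ ^ 2) _ 0 :=
    ((hσ 0).const_mul (-2 * A)).div (hs 0) hn0
  have hc2 : HasDerivAt (fun τ : ℝ => -2 * (k / ‖x + τ • e‖ ^ 2) * inner ℝ (x + τ • e) e / ‖x + τ • e‖ ^ 2) _ 0 :=
    (((hρ 0 h0).const_mul (-2)).mul (hσ 0)).div (hs 0) hn0
  have hfin := (((hρA 0 h0).mul hc).mul hU).add
    ((hρA 0 h0).mul (hDu.clm_apply (((hρ 0 h0).smul_const e).add (hc2.smul (hX 0)))))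
  refine (hfin.deriv).trans ?_
  simp only [Function.comp, zero_smul, add_zero, map_add, map_smul, smul_eq_mul,
    add_apply, smul_apply, Pi.mul_apply, Pi.add_apply, Pi.smul_apply']
  generalize (k / ‖x‖ ^ 2) ^ A = R
  have hρ0 : k / ‖x‖ ^ 2 * ‖x‖ ^ 2 = k := by field_simp
  generalize fderiv ℝ u ((k / ‖x‖ ^ 2) • x) x = a1
  generalize fderiv ℝ u ((k / ‖x‖ ^ 2) • x) e = a2
  generalize fderiv ℝ (fderiv ℝ u) ((k / ‖x‖ ^ 2) • x) = D
  generalize u ((k / ‖x‖ ^ 2) • x) = a0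
  generalize D x x = d1
  generalize D x e = d2
  generalize D e x = d3
  generalize D e e = d4
  generalize inner ℝ x e = σ
  field_simp
  ring

lemma lap_kel {n : ℕ} {A k : ℝ} {u : EE n → ℝ} (hu : ContDiff ℝ 2 u) (hk : 0 < k)
    {x : EE n} (hx : x ≠ 0) :
    lap (kel A k u) x = (k / ‖x‖ ^ 2) ^ A * ((k / ‖x‖ ^ 2) ^ 2 * lap u ((k / ‖x‖ ^ 2) • x)
      + 2 * (2 * A - n + 2) / ‖x‖ ^ 2 * (A * u ((k / ‖x‖ ^ 2) • x) +
        fderiv ℝ u ((k / ‖x‖ ^ 2) • x) ((k / ‖x‖ ^ 2) • x))) := by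
  rw [lap_eq (kel_contDiffAt hu hk hx)]
  have hnx : 0 < ‖x‖ := by simpa using hx
  have hu1 : ContDiff ℝ 1 (fderiv ℝ u) := hu.fderiv_right (by norm_num)
  have hud2 : Differentiable ℝ (fderiv ℝ u) := hu1.differentiable (by norm_num)
  have hlap : ∀ y, lap u y = ∑ i : Fin n, fderiv ℝ (fderiv ℝ u) y
      (EuclideanSpace.single i (1:ℝ)) (EuclideanSpace.single i (1:ℝ)) := by
    intro y
    unfold lap
    refine Finset.sum_congr rfl fun i _ => ?_
    rw [((hud2 y).hasFDerivAt.clm_apply (hasFDerivAt_const _ y)).fderiv]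
    simp
  have he : ∀ i : Fin n, ‖(EuclideanSpace.single i (1:ℝ) : EE n)‖ = 1 := by
    intro i; simp
  have hin : ∀ i : Fin n, inner ℝ x (EuclideanSpace.single i (1:ℝ) : EE n) = x i := by
    intro i; simp [EuclideanSpace.inner_single_right]
  have hsum : ∀ L : EE n →L[ℝ] ℝ, ∑ i : Fin n, x i * L (EuclideanSpace.single i (1:ℝ)) = L x := by
    intro L
    have hx' : x = ∑ i : Fin n, x i • (EuclideanSpace.single i (1:ℝ) : EE n) := by
      simpa using ((EuclideanSpace.basisFun (Fin n) ℝ).sum_repr x).symm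
    conv_rhs => rw [hx', map_sum]
    simp
  have hsq : ∑ i : Fin n, x i ^ 2 = ‖x‖ ^ 2 := by
    rw [EuclideanSpace.norm_sq_eq]; simp
  simp_rw [fun i : Fin n => kel_line (A := A) hu hk hx (he i), hin]
  have hDy : fderiv ℝ u ((k / ‖x‖ ^ 2) • x) ((k / ‖x‖ ^ 2) • x) =
      (k / ‖x‖ ^ 2) * fderiv ℝ u ((k / ‖x‖ ^ 2) • x) x := by rw [map_smul, smul_eq_mul]
  rw [hlap, hDy]
  clear hDy
  generalize (k / ‖x‖ ^ 2) • x = y at *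
  set r := k / ‖x‖ ^ 2 with hr
  have hD2 := hsum (fderiv ℝ (fderiv ℝ u) y x)
  have hD3 := hsum ((fderiv ℝ (fderiv ℝ u) y).flip x)
  have hD1 := hsum (fderiv ℝ u y)
  simp only [ContinuousLinearMap.flip_apply] at hD3
  simp only [← Finset.mul_sum, Finset.sum_add_distrib, Finset.sum_sub_distrib, ← Finset.sum_mul,
    hsq, hD1, hD2, hD3, Finset.sum_const, Finset.card_univ, Fintype.card_fin, nsmul_eq_mul]
  field_simp
  ring


noncomputable def bar {n : ℕ} (m : ℝ) (x : EE n) : ℝ := (1 / ‖x‖ ^ 2) ^ m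

noncomputable def Pd {n : ℕ} (A : ℝ) (u : EE n → ℝ) (x : EE n) : ℝ := A * u x + fderiv ℝ u x x

lemma bar_eq {n : ℕ} (m : ℝ) : (bar m : EE n → ℝ) = kel m 1 (fun _ => 1) := by
  funext x; simp [bar, kel]

lemma bar_contDiffAt {n : ℕ} (m : ℝ) {x : EE n} (hx : x ≠ 0) : ContDiffAt ℝ 2 (bar m) x := by
  rw [bar_eq]; exact kel_contDiffAt contDiff_const one_pos hx

lemma lap_bar {n : ℕ} {m : ℝ} (hm : m = ((n : ℝ) - 2) / 2) {x : EE n} (hx : x ≠ 0) :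
    lap (bar m) x = 0 := by
  rw [bar_eq, lap_kel contDiff_const one_pos hx]
  have h1 : 2 * m - n + 2 = 0 := by rw [hm]; ring
  rw [h1]
  simp [lap]

lemma comparison {n : ℕ} {m : ℝ} (hm : m = ((n : ℝ) - 2) / 2) {r1 r2 : ℝ} (h1 : 0 < r1)
    {ω : EE n → ℝ} (hc : ContinuousOn ω {x | r1 ≤ ‖x‖ ^ 2 ∧ ‖x‖ ^ 2 ≤ r2})
    (hd : ∀ x, r1 < ‖x‖ ^ 2 → ‖x‖ ^ 2 < r2 → ContDiffAt ℝ 2 ω x ∧ lap ω x < 0) (c d : ℝ)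
    (hb1 : ∀ x, ‖x‖ ^ 2 = r1 → c * bar m x + d ≤ ω x)
    (hb2 : ∀ x, ‖x‖ ^ 2 = r2 → c * bar m x + d ≤ ω x) (x : EE n)
    (hx1 : r1 ≤ ‖x‖ ^ 2) (hx2 : ‖x‖ ^ 2 ≤ r2) : c * bar m x + d ≤ ω x := by
  set K : Set (EE n) := {x | r1 ≤ ‖x‖ ^ 2 ∧ ‖x‖ ^ 2 ≤ r2} with hK
  have hne : ∀ y : EE n, r1 ≤ ‖y‖ ^ 2 → y ≠ 0 := by
    rintro y hy rfl
    simp at hy; linarith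
  have hnc : Continuous fun y : EE n => ‖y‖ ^ 2 := by fun_prop
  have hKc : IsCompact K := by
    refine Metric.isCompact_of_isClosed_isBounded ?_ ?_
    · exact (isClosed_le continuous_const hnc).inter (isClosed_le hnc continuous_const)
    · refine (Metric.isBounded_closedBall (x := (0 : EE n)) (r := r2 + 1)).subset ?_
      rintro y ⟨_, hy⟩
      rw [mem_closedBall_zero_iff]
      nlinarith [sq_nonneg (‖y‖ - 1)]
  have hbc : ContinuousOn (fun y => ω y - (c * bar m y + d)) K := by
    refine hc.sub ((continuousOn_const.mul ?_).add continuousOn_const)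
    intro y hy
    exact (bar_contDiffAt m (hne y hy.1)).continuousAt.continuousWithinAt
  obtain ⟨z, hz, hmin⟩ := hKc.exists_isMinOn ⟨x, hx1, hx2⟩ hbc
  by_contra hcon
  push Not at hcon
  have hzx := hmin (show x ∈ K from ⟨hx1, hx2⟩)
  simp only [Set.mem_ofPred_eq] at hzx
  have hz1 : r1 < ‖z‖ ^ 2 := lt_of_le_of_ne hz.1 fun h => by
    have := hb1 z h.symm; linarith
  have hz2 : ‖z‖ ^ 2 < r2 := lt_of_le_of_ne hz.2 fun h => by
    have := hb2 z h; linarith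
  obtain ⟨e1, e2⟩ := hd z hz1 hz2
  have hnhds : K ∈ nhds z := by
    have ho : IsOpen {x : EE n | r1 < ‖x‖ ^ 2 ∧ ‖x‖ ^ 2 < r2} :=
      (isOpen_lt continuous_const hnc).inter (isOpen_lt hnc continuous_const)
    refine Filter.mem_of_superset (ho.mem_nhds ⟨hz1, hz2⟩) ?_
    rintro y ⟨a, b⟩
    exact ⟨a.le, b.le⟩
  have hloc := hmin.isLocalMin hnhds
  have hbz := bar_contDiffAt m (hne z hz.1)
  have hb' : ContDiffAt ℝ 2 (fun y => c * bar m y + d) z :=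
    (contDiffAt_const.mul hbz).add contDiffAt_const
  have := lap_nonneg_of_min (e1.sub hb') hloc
  rw [lap_sub e1 hb', lap_const_mul c d hbz, lap_bar hm (hne z hz.1)] at this
  linarith

lemma deriv_nonneg_right {f : ℝ → ℝ} {f' δ : ℝ} (hf : HasDerivAt f f' 1) (h1 : f 1 = 0) (hδ : 0 < δ)
    (h : ∀ τ, 1 < τ → τ < 1 + δ → 0 ≤ f τ) : 0 ≤ f' := by
  have ht := (hasDerivWithinAt_iff_tendsto_slope' (s := Set.Ioi (1:ℝ)) (by simp)).1
    (hf.hasDerivWithinAt (s := Set.Ioi 1))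
  refine ge_of_tendsto ht ?_
  filter_upwards [Ioo_mem_nhdsGT (show (1:ℝ) < 1 + δ by linarith)] with τ hτ
  rw [slope_def_field, h1, sub_zero]
  exact div_nonneg (h τ hτ.1 hτ.2) (by linarith [hτ.1])

lemma ray_deriv {n : ℕ} {A : ℝ} {u : EE n → ℝ} (hu : ContDiff ℝ 2 u) {x : EE n} (hx : x ≠ 0) :
    HasDerivAt (fun τ : ℝ => u (τ • x) - kel A (‖x‖ ^ 2) u (τ • x)) (2 * Pd A u x) 1 := by
  have hud : Differentiable ℝ u := hu.differentiable (by norm_num)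
  have hnx : 0 < ‖x‖ := by simpa using hx
  have e1 : HasDerivAt (fun τ : ℝ => τ • x) x 1 := by
    simpa using (hasDerivAt_id (1:ℝ)).smul_const x
  have e2 : HasDerivAt (fun τ : ℝ => τ⁻¹) (-1) 1 := by
    simpa using hasDerivAt_inv (one_ne_zero (α := ℝ))
  have e3 : HasDerivAt (fun τ : ℝ => τ⁻¹ • x) (-x) 1 := by
    simpa using e2.smul_const x
  have e4 : HasDerivAt (fun τ : ℝ => (τ⁻¹ ^ 2) ^ A) (-2 * A) 1 := by
    have := (e2.pow 2).rpow_const (p := A) (Or.inl (by norm_num))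
    refine this.congr_deriv ?_
    norm_num
  have f1 : HasDerivAt (fun τ : ℝ => u (τ • x)) (fderiv ℝ u x x) 1 := by
    have := (hud ((1:ℝ) • x)).hasFDerivAt.comp_hasDerivAt (1:ℝ) e1
    exact this.congr_deriv (by simp)
  have f2 : HasDerivAt (fun τ : ℝ => u (τ⁻¹ • x)) (-fderiv ℝ u x x) 1 := by
    have := (hud ((1:ℝ)⁻¹ • x)).hasFDerivAt.comp_hasDerivAt (1:ℝ) e3
    exact this.congr_deriv (by simp)
  have f3 := f1.sub (e4.mul f2)
  have : (fun τ : ℝ => u (τ • x) - kel A (‖x‖ ^ 2) u (τ • x)) =ᶠ[nhds 1]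
      ((fun τ : ℝ => u (τ • x)) - (fun τ : ℝ => (τ⁻¹ ^ 2) ^ A) * fun τ : ℝ => u (τ⁻¹ • x)) := by
    filter_upwards [lt_mem_nhds (zero_lt_one (α := ℝ))] with τ hτ
    have h1 : ‖x‖ ^ 2 / ‖τ • x‖ ^ 2 = τ⁻¹ ^ 2 := by
      rw [norm_smul, Real.norm_of_nonneg hτ.le]; field_simp
    simp only [kel, h1, Pi.sub_apply, Pi.mul_apply, smul_smul]
    congr 4
    field_simp
  refine (f3.congr_of_eventuallyEq this).congr_deriv ?_
  simp [Pd]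
  ring

lemma Pd_nonneg {n : ℕ} {A : ℝ} {u : EE n → ℝ} (hu : ContDiff ℝ 2 u) {x : EE n} (hx : x ≠ 0)
    (h : ∀ y, ‖x‖ ^ 2 ≤ ‖y‖ ^ 2 → kel A (‖x‖ ^ 2) u y ≤ u y) : 0 ≤ Pd A u x := by
  have hnx : 0 < ‖x‖ := by simpa using hx
  have := deriv_nonneg_right (ray_deriv (A := A) hu hx) (by simp [kel, hnx.ne']) one_pos (by
    intro τ h1 _
    have : ‖x‖ ^ 2 ≤ ‖τ • x‖ ^ 2 := by
      rw [norm_smul, Real.norm_of_nonneg (by linarith)]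
      gcongr
      nlinarith
    linarith [h _ this])
  linarith

lemma ray_mono {n : ℕ} {A : ℝ} {u : EE n → ℝ} (hu : ContDiff ℝ 2 u) {x : EE n} {ρ : ℝ} (hρ : 0 < ρ)
    (hρ1 : ρ ≤ 1) (h : ∀ τ : ℝ, 0 < τ → τ ≤ 1 → 0 ≤ Pd A u (τ • x)) : ρ ^ A * u (ρ • x) ≤ u x := by
  have hud : Differentiable ℝ u := hu.differentiable (by norm_num)
  have hd : ∀ τ : ℝ, 0 < τ → HasDerivAt (fun τ : ℝ => τ ^ A * u (τ • x))
      (τ ^ (A - 1) * Pd A u (τ • x)) τ := by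
    intro τ hτ
    have e1 : HasDerivAt (fun τ : ℝ => τ • x) x τ := by
      simpa using (hasDerivAt_id τ).smul_const x
    have := (Real.hasDerivAt_rpow_const (p := A) (Or.inl hτ.ne')).mul
      ((hud (τ • x)).hasFDerivAt.comp_hasDerivAt τ e1)
    refine this.congr_deriv ?_
    have h1 : τ ^ A = τ ^ (A - 1) * τ := by
      rw [Real.rpow_sub_one hτ.ne']; field_simp
    simp only [Pd, Function.comp, map_smul, smul_eq_mul, h1]
    ring
  have hm : MonotoneOn (fun τ : ℝ => τ ^ A * u (τ • x)) (Set.Icc ρ 1) := by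
    refine monotoneOn_of_deriv_nonneg (convex_Icc ρ 1) ?_ ?_ ?_
    · intro τ hτ
      exact (hd τ (hρ.trans_le hτ.1)).continuousAt.continuousWithinAt
    · intro τ hτ
      rw [interior_Icc] at hτ
      exact (hd τ (hρ.trans hτ.1)).differentiableAt.differentiableWithinAt
    · intro τ hτ
      rw [interior_Icc] at hτ
      have h0 := hρ.trans hτ.1
      rw [(hd τ h0).deriv]
      exact mul_nonneg (Real.rpow_nonneg h0.le _) (h τ h0 hτ.2.le)
  simpa using hm (Set.left_mem_Icc.2 hρ1) (Set.right_mem_Icc.2 hρ1) hρ1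


lemma kel_contDiffAt' {n : ℕ} {A k : ℝ} {u : EE n → ℝ} (hu : ContDiff ℝ 2 u) (hA : 0 < A) (hk : 0 ≤ k)
    {x : EE n} (hx : x ≠ 0) : ContDiffAt ℝ 2 (kel A k u) x := by
  rcases hk.eq_or_lt with rfl | hk
  · have : kel A 0 u = fun _ => 0 := by
      funext y; simp [kel, Real.zero_rpow hA.ne']
    rw [this]; exact contDiffAt_const
  · exact kel_contDiffAt hu hk hx

lemma Pd_continuous {n : ℕ} {A : ℝ} {u : EE n → ℝ} (hu : ContDiff ℝ 2 u) : Continuous (Pd A u) := by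
  have h1 : Continuous (fderiv ℝ u) := hu.continuous_fderiv (by norm_num)
  have h2 := hu.continuous
  unfold Pd
  exact (continuous_const.mul h2).add (h1.clm_apply continuous_id)

lemma sphere_compact {n : ℕ} (a b : ℝ) : IsCompact {x : EE n | a ≤ ‖x‖ ^ 2 ∧ ‖x‖ ^ 2 ≤ b} := by
  have hnc : Continuous fun y : EE n => ‖y‖ ^ 2 := by fun_prop
  refine Metric.isCompact_of_isClosed_isBounded ?_ ?_
  · exact (isClosed_le continuous_const hnc).inter (isClosed_le hnc continuous_const)
  · refine (Metric.isBounded_closedBall (x := (0 : EE n)) (r := b + 1)).subset ?_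
    rintro y ⟨_, hy⟩
    rw [mem_closedBall_zero_iff]
    nlinarith [sq_nonneg (‖y‖ - 1)]

lemma hopf {n : ℕ} {A m k : ℝ} {u : EE n → ℝ} (hu : ContDiff ℝ 2 u) (hm : m = ((n : ℝ) - 2) / 2)
    (hm0 : 0 < m) (hA : m ≤ A) (hk : 0 < k)
    (hω : ∀ x, k < ‖x‖ ^ 2 → 0 < u x - kel A k u x)
    (hlap : ∀ x, k < ‖x‖ ^ 2 → lap (fun y => u y - kel A k u y) x < 0)
    {x : EE n} (hx : ‖x‖ ^ 2 = k) : 0 < Pd A u x := by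
  have hne : ∀ y : EE n, k ≤ ‖y‖ ^ 2 → y ≠ 0 := by
    rintro y hy rfl
    simp at hy; linarith
  have hcd : ∀ y : EE n, k ≤ ‖y‖ ^ 2 → ContDiffAt ℝ 2 (fun y => u y - kel A k u y) y := fun y hy =>
    hu.contDiffAt.sub (kel_contDiffAt hu hk (hne y hy))
  have hbar : ∀ (y : EE n) (r : ℝ), ‖y‖ ^ 2 = r → bar m y = (1 / r) ^ m := by
    rintro y r rfl; rfl
  obtain ⟨c0, hc0, hc⟩ := (sphere_compact (n := n) (4 * k) (4 * k)).exists_forall_le'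
    (f := fun y => u y - kel A k u y) (a := 0)
    (fun y hy => (hcd y (by linarith [hy.1])).continuousAt.continuousWithinAt)
    (fun y hy => hω y (by linarith [hy.1]))
  set c := c0 * k ^ m with hcdef
  have hkm : 0 < k ^ m := Real.rpow_pos_of_pos hk m
  have hcpos : 0 < c := by positivity
  have hkinv : k ^ m * (1 / k) ^ m = 1 := by
    rw [← Real.mul_rpow hk.le (by positivity)]; field_simp; simp
  have hcomp : ∀ y : EE n, k ≤ ‖y‖ ^ 2 → ‖y‖ ^ 2 ≤ 4 * k →
      -c * bar m y + c0 ≤ u y - kel A k u y := by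
    refine fun y => comparison (ω := fun y => u y - kel A k u y) hm hk ?_ ?_ (-c) c0 ?_ ?_ y
    · intro y hy
      exact (hcd y hy.1).continuousAt.continuousWithinAt
    · intro y h1 _
      exact ⟨hcd y h1.le, hlap y h1⟩
    · intro y hy
      have h1 : kel A k u y = u y := by
        have h2 : k / ‖y‖ ^ 2 = 1 := by rw [hy]; field_simp
        simp [kel, h2]
      rw [h1, hbar y k hy, hcdef]
      have : -(c0 * k ^ m) * (1 / k) ^ m = -c0 := by
        linear_combination (-c0) * hkinv
      rw [this]; simp
    · intro y hy
      have : 0 ≤ bar m y := Real.rpow_nonneg (by positivity) _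
      have h3 := hc y ⟨hy.ge, hy.le⟩
      nlinarith
  have hx0 : x ≠ 0 := hne x hx.ge
  have e2 : HasDerivAt (fun τ : ℝ => τ⁻¹) (-1) 1 := by
    simpa using hasDerivAt_inv (one_ne_zero (α := ℝ))
  have e4 : HasDerivAt (fun τ : ℝ => (τ⁻¹ ^ 2) ^ m) (-2 * m) 1 := by
    have := (e2.pow 2).rpow_const (p := m) (Or.inl (by norm_num))
    refine this.congr_deriv ?_
    norm_num
  have hray := ray_deriv (A := A) hu hx0
  rw [hx] at hray
  have hk1 : kel A k u x = u x := by
    have h2 : k / ‖x‖ ^ 2 = 1 := by rw [hx]; field_simp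
    simp [kel, h2]
  have hfin := hray.sub (((e4.const_mul (-c0)).add_const c0))
  have := deriv_nonneg_right hfin (by simp [hk1]) one_pos (by
    intro τ h1 h2
    have hnorm : ‖τ • x‖ ^ 2 = τ ^ 2 * k := by
      rw [norm_smul, Real.norm_of_nonneg (by linarith), mul_pow, hx]
    have h3 := hcomp (τ • x) (by rw [hnorm]; nlinarith [show (1:ℝ) ≤ τ ^ 2 by nlinarith])
      (by rw [hnorm]; nlinarith [show τ ^ 2 ≤ (4:ℝ) by nlinarith])
    have h4 : bar m (τ • x) = (τ⁻¹ ^ 2) ^ m * (1 / k) ^ m := by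
      rw [hbar _ _ hnorm, ← Real.mul_rpow (by positivity) (by positivity)]
      congr 1
      field_simp
    have h5 : -c * bar m (τ • x) = -c0 * (τ⁻¹ ^ 2) ^ m := by
      rw [h4, hcdef]; linear_combination (-c0 * (τ⁻¹ ^ 2) ^ m) * hkinv
    simp only [Pi.sub_apply]
    linarith)
  nlinarith [mul_pos hc0 hm0]

lemma open_step {n : ℕ} {A m k : ℝ} {u : EE n → ℝ} (hu : ContDiff ℝ 2 u) (hm : m = ((n : ℝ) - 2) / 2)
    (hm0 : 0 < m) (hA : m ≤ A) (hk : 0 ≤ k) (hup : ∀ x, 0 < u x)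
    (hω : ∀ x, k < ‖x‖ ^ 2 → 0 < u x - kel A k u x)
    (hlap : ∀ x, k < ‖x‖ ^ 2 → lap (fun y => u y - kel A k u y) x < 0)
    (hP : ∀ x, ‖x‖ ^ 2 ≤ k → 0 ≤ Pd A u x) :
    ∀ᶠ j in nhdsWithin k (Set.Ioi k), ∀ x : EE n, j ≤ ‖x‖ ^ 2 → kel A j u x ≤ u x := by
  have hA0 : 0 < A := hm0.trans_le hA
  have hPk : ∀ x : EE n, ‖x‖ ^ 2 = k → 0 < Pd A u x := by
    intro x hx
    rcases hk.eq_or_lt with rfl | hk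
    · have : x = 0 := by simpa using hx
      subst this
      simpa [Pd] using mul_pos hA0 (hup 0)
    · exact hopf hu hm hm0 hA hk hω hlap hx
  -- neighbourhood of the closed ball where `Pd` is nonnegative
  obtain ⟨r1, hr1, hPr⟩ : ∃ r1, k < r1 ∧ ∀ x : EE n, ‖x‖ ^ 2 ≤ r1 → 0 ≤ Pd A u x := by
    have hC : IsCompact ({x : EE n | k ≤ ‖x‖ ^ 2 ∧ ‖x‖ ^ 2 ≤ k + 1} ∩ {x | Pd A u x ≤ 0}) :=
      (sphere_compact k (k + 1)).inter_right (isClosed_le (Pd_continuous hu) continuous_const)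
    obtain ⟨a, ha, hab⟩ := hC.exists_forall_le' (f := fun y : EE n => ‖y‖ ^ 2) (a := k)
      (by fun_prop) (by
        rintro y ⟨⟨h1, _⟩, h2⟩
        refine lt_of_le_of_ne h1 fun h => ?_
        have := hPk y h.symm
        have h2' : Pd A u y ≤ 0 := h2
        linarith)
    refine ⟨min (k + 1) ((k + a) / 2), lt_min (by linarith) (by linarith), fun x hx => ?_⟩
    by_contra hneg
    push Not at hneg
    have hx1 : ‖x‖ ^ 2 ≤ k + 1 := hx.trans (min_le_left _ _)
    have hx2 : ‖x‖ ^ 2 ≤ (k + a) / 2 := hx.trans (min_le_right _ _)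
    have hx3 : k ≤ ‖x‖ ^ 2 := by
      by_contra h
      push Not at h
      linarith [hP x h.le]
    have := hab x ⟨⟨hx3, hx1⟩, hneg.le⟩
    linarith
  have hr0 : 0 < r1 := hk.trans_lt hr1
  have hne : ∀ y : EE n, r1 ≤ ‖y‖ ^ 2 → y ≠ 0 := by
    rintro y hy rfl
    simp at hy; linarith
  have hcd : ∀ y : EE n, r1 ≤ ‖y‖ ^ 2 → ContDiffAt ℝ 2 (fun y => u y - kel A k u y) y := fun y hy =>
    hu.contDiffAt.sub (kel_contDiffAt' hu hA0 hk (hne y hy))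
  have hbar : ∀ (y : EE n) (r : ℝ), ‖y‖ ^ 2 = r → bar m y = (1 / r) ^ m := by
    rintro y r rfl; rfl
  obtain ⟨c0, hc0, hc⟩ := (sphere_compact (n := n) r1 r1).exists_forall_le'
    (f := fun y => u y - kel A k u y) (a := 0)
    (fun y hy => (hcd y hy.1).continuousAt.continuousWithinAt)
    (fun y hy => hω y (by linarith [hy.1]))
  set c := c0 * r1 ^ m with hcdef
  have hkm : 0 < r1 ^ m := Real.rpow_pos_of_pos hr0 m
  have hcpos : 0 < c := by positivity
  have hkinv : r1 ^ m * (1 / r1) ^ m = 1 := by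
    rw [← Real.mul_rpow hr0.le (by positivity)]; field_simp; simp
  have hfar : ∀ x : EE n, r1 ≤ ‖x‖ ^ 2 → c * bar m x ≤ u x - kel A k u x := by
    intro x hx
    have hR : ∀ R, ‖x‖ ^ 2 ≤ R → c * bar m x + -(c * (1 / R) ^ m) ≤ u x - kel A k u x := by
      intro R hR
      have hR0 : 0 < R := hr0.trans_le (hx.trans hR)
      refine comparison (ω := fun y => u y - kel A k u y) hm hr0 ?_ ?_ c (-(c * (1 / R) ^ m)) ?_ ?_ x hx hR
      · intro y hy
        exact (hcd y hy.1).continuousAt.continuousWithinAt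
      · intro y h1 _
        exact ⟨hcd y h1.le, hlap y (hr1.trans h1)⟩
      · intro y hy
        have h1 : c * bar m y = c0 := by
          rw [hbar y r1 hy, hcdef]; linear_combination c0 * hkinv
        have h2 := hc y ⟨hy.ge, hy.le⟩
        have h3 : 0 ≤ c * (1 / R) ^ m := by positivity
        linarith
      · intro y hy
        rw [hbar y R hy]
        have := hω y (by rw [hy]; linarith)
        linarith
    have hlim : Filter.Tendsto (fun R : ℝ => c * bar m x + -(c * (1 / R) ^ m)) Filter.atTop
        (nhds (c * bar m x + -(c * 0))) := by
      refine Filter.Tendsto.const_add _ (Filter.Tendsto.neg (Filter.Tendsto.const_mul _ ?_))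
      have h1 : Filter.Tendsto (fun R : ℝ => 1 / R) Filter.atTop (nhds 0) := by
        simpa using tendsto_inv_atTop_zero (𝕜 := ℝ)
      have := h1.rpow_const (p := m) (Or.inr hm0.le)
      rwa [Real.zero_rpow hm0.ne'] at this
    have := le_of_tendsto hlim ((Filter.eventually_ge_atTop (‖x‖ ^ 2)).mono hR)
    simpa using this
  -- uniform closeness
  have hunif : ∀ᶠ j in nhds k, ∀ z ∈ Metric.closedBall (0 : EE n) (1 / Real.sqrt r1),
      j ^ A * u (j • z) < k ^ A * u (k • z) + c * r1 ^ (A - m) := by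
    refine (isCompact_closedBall _ _).eventually_forall_of_forall_eventually fun z _ => ?_
    have hc1 : ContinuousAt (fun q : ℝ × EE n => q.1 ^ A * u (q.1 • q.2)) (k, z) := by
      refine ContinuousAt.mul ?_ (hu.continuous.comp (by fun_prop : Continuous fun q : ℝ × EE n => q.1 • q.2)).continuousAt
      exact (continuousAt_fst).rpow_const (Or.inr hA0.le)
    have hc2 : ContinuousAt (fun q : ℝ × EE n => k ^ A * u (k • q.2) + c * r1 ^ (A - m)) (k, z) := by
      have := hu.continuous
      fun_prop
    refine hc1.eventually_lt hc2 ?_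
    have : 0 < c * r1 ^ (A - m) := by positivity
    simp only
    linarith
  filter_upwards [self_mem_nhdsWithin, hunif.filter_mono nhdsWithin_le_nhds] with j hj hju x hjx
  have hj' : k < j := hj
  have hj0 : 0 < j := hk.trans_lt hj'
  have hx0 : 0 < ‖x‖ ^ 2 := hj0.trans_le hjx
  rcases le_total (‖x‖ ^ 2) r1 with hx | hx
  · refine ray_mono hu (by positivity) (by rw [div_le_one hx0]; exact hjx) fun τ h0 h1 => hPr _ ?_
    rw [norm_smul, Real.norm_of_nonneg h0.le, mul_pow]
    have : τ ^ 2 ≤ 1 := by nlinarith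
    nlinarith
  · set s := ‖x‖ ^ 2 with hs
    have hkel : ∀ i, 0 ≤ i → kel A i u x = (1 / s) ^ A * (i ^ A * u (i • ((1 / s) • x))) := by
      intro i hi
      rw [kel, ← hs, smul_smul, ← mul_assoc, ← Real.mul_rpow (by positivity) hi]
      congr 2 <;> field_simp
    have hz : (1 / s) • x ∈ Metric.closedBall (0 : EE n) (1 / Real.sqrt r1) := by
      rw [mem_closedBall_zero_iff, norm_smul, Real.norm_of_nonneg (by positivity)]
      have hx' : 0 < ‖x‖ := by
        by_contra h
        have : ‖x‖ = 0 := le_antisymm (not_lt.1 h) (norm_nonneg x)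
        rw [hs, this] at hx0; simp at hx0
      have : 1 / s * ‖x‖ = 1 / ‖x‖ := by rw [hs]; field_simp
      rw [this]
      apply one_div_le_one_div_of_le (Real.sqrt_pos.2 hr0)
      exact Real.sqrt_le_iff.2 ⟨hx'.le, hx⟩
    have h1 := hju _ hz
    have h2 := hfar x hx
    have hbx : bar m x = (1 / s) ^ m := rfl
    have h3 : (1 / s) ^ A * r1 ^ (A - m) ≤ (1 / s) ^ m := by
      have h4 : (1 / s) ^ A = (1 / s) ^ m * (1 / s) ^ (A - m) := by
        rw [← Real.rpow_add (by positivity)]; congr 1; ring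
      rw [h4, mul_assoc, ← Real.mul_rpow (by positivity) hr0.le]
      refine mul_le_of_le_one_right (by positivity) ?_
      refine Real.rpow_le_one (by positivity) ?_ (by linarith)
      rw [one_div_mul_eq_div, div_le_one hx0]; exact hx
    have h5 : 0 < (1 / s) ^ A := by positivity
    rw [hkel k hk] at h2
    rw [hkel j hj0.le]
    rw [hbx] at h2
    nlinarith [mul_lt_mul_of_pos_left h1 h5, mul_le_mul_of_nonneg_left h3 hcpos.le]


lemma lap_neg {n : ℕ} {A B p k : ℝ} {u v : EE n → ℝ} (hu : ContDiff ℝ 2 u)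
    (hv0 : ∀ x, 0 < v x) (hlu : ∀ x, -lap u x = v x ^ p) (hp : 1 ≤ p) (hA0 : 0 < A)
    (hA : ((n : ℝ) - 2) / 2 ≤ A) (hAB : p * B < A + 2) (hk : 0 ≤ k)
    (hS : ∀ x, k ≤ ‖x‖ ^ 2 → kel B k v x ≤ v x)
    (hP : ∀ x, ‖x‖ ^ 2 ≤ k → 0 ≤ Pd A u x) (x : EE n) (hx : k < ‖x‖ ^ 2) :
    lap (fun y => u y - kel A k u y) x < 0 := by
  have hs : 0 < ‖x‖ ^ 2 := hk.trans_lt hx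
  have hx0 : x ≠ 0 := by
    rintro rfl; simp at hs
  rw [lap_sub hu.contDiffAt (kel_contDiffAt' hu hA0 hk hx0)]
  have hvp : 0 < v x ^ p := Real.rpow_pos_of_pos (hv0 x) p
  have h1 := hlu x
  rcases hk.eq_or_lt with rfl | hk
  · have : kel A 0 u = fun _ => 0 := by
      funext y; simp [kel, Real.zero_rpow hA0.ne']
    have h2 : lap (kel A 0 u) x = 0 := by rw [this]; simp [lap]
    linarith
  · rw [lap_kel hu hk hx0]
    have h3 := hS x hx.le
    rw [kel] at h3
    set ρ := k / ‖x‖ ^ 2 with hρ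
    have hρ0 : 0 < ρ := by positivity
    have hρ1 : ρ < 1 := by rw [hρ, div_lt_one hs]; exact hx
    have hy : ‖ρ • x‖ ^ 2 ≤ k := by
      rw [norm_smul, Real.norm_of_nonneg hρ0.le, mul_pow]
      have : ρ * ‖x‖ ^ 2 = k := by rw [hρ]; field_simp
      nlinarith
    have hPy := hP _ hy
    rw [Pd] at hPy
    have h4 := hlu (ρ • x)
    have h5 : (ρ ^ B * v (ρ • x)) ^ p ≤ v x ^ p := by
      refine Real.rpow_le_rpow ?_ h3 (by linarith)
      have := hv0 (ρ • x)
      positivity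
    rw [Real.mul_rpow (by positivity) (hv0 _).le, ← Real.rpow_mul hρ0.le] at h5
    have hvy : 0 < v (ρ • x) ^ p := Real.rpow_pos_of_pos (hv0 _) p
    have h6 : ρ ^ A * ρ ^ 2 < ρ ^ (B * p) := by
      rw [← Real.rpow_natCast ρ 2, ← Real.rpow_add hρ0]
      refine Real.rpow_lt_rpow_of_exponent_gt hρ0 hρ1 ?_
      push_cast
      linarith
    have h7 : 0 ≤ ρ ^ A * (2 * (2 * A - n + 2) / ‖x‖ ^ 2 *
        (A * u (ρ • x) + fderiv ℝ u (ρ • x) (ρ • x))) := by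
      have : 0 ≤ 2 * A - n + 2 := by linarith
      positivity
    have h8 := mul_lt_mul_of_pos_right h6 hvy
    have h9 : lap u (ρ • x) = - v (ρ • x) ^ p := by linarith
    rw [mul_add, h9]
    nlinarith

lemma kel_zero {n : ℕ} {A : ℝ} {u : EE n → ℝ} (hA0 : 0 < A) (x : EE n) : kel A 0 u x = 0 := by
  simp [kel, Real.zero_rpow hA0.ne']

lemma kel_self {n : ℕ} {A k : ℝ} {u : EE n → ℝ} (hk : 0 < k) {x : EE n} (hx : ‖x‖ ^ 2 = k) :
    kel A k u x = u x := by
  have h2 : k / ‖x‖ ^ 2 = 1 := by rw [hx]; field_simp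
  simp [kel, h2]

lemma kel_limit {n : ℕ} {A a : ℝ} {u : EE n → ℝ} (hu : ContDiff ℝ 2 u) (hu0 : ∀ x, 0 < u x)
    (hA0 : 0 < A) (ha : 0 ≤ a) {s : ℕ → ℝ} (hs : Filter.Tendsto s Filter.atTop (nhds a))
    (h : ∀ i, ∀ x : EE n, s i ≤ ‖x‖ ^ 2 → kel A (s i) u x ≤ u x) (x : EE n) (hx : a ≤ ‖x‖ ^ 2) :
    kel A a u x ≤ u x := by
  rcases ha.eq_or_lt with rfl | ha
  · rw [kel_zero hA0]; exact (hu0 x).le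
  rcases hx.eq_or_lt with hx | hx
  · exact (kel_self ha hx.symm).le
  have hc : Continuous (fun i : ℝ => kel A i u x) := by
    unfold kel
    have h1 : Continuous fun i : ℝ => i / ‖x‖ ^ 2 := continuous_id.div_const _
    exact (h1.rpow_const fun _ => Or.inr hA0.le).mul (hu.continuous.comp (h1.smul continuous_const))
  refine le_of_tendsto ((hc.tendsto a).comp hs) ?_
  filter_upwards [hs.eventually_lt_const hx] with i hi using h i x hi.le

lemma core {n : ℕ} {A B p q m : ℝ} {u v : EE n → ℝ} (hu : ContDiff ℝ 2 u) (hv : ContDiff ℝ 2 v)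
    (hu0 : ∀ x, 0 < u x) (hv0 : ∀ x, 0 < v x) (hlu : ∀ x, -lap u x = v x ^ p)
    (hlv : ∀ x, -lap v x = u x ^ q) (hp : 1 ≤ p) (hq : 1 ≤ q) (hm : m = ((n : ℝ) - 2) / 2)
    (hm0 : 0 < m) (hA : m ≤ A) (hB : m ≤ B) (hAB : p * B < A + 2) (hBA : q * A < B + 2) (x : EE n) :
    0 ≤ Pd A u x := by
  have hA0 : 0 < A := hm0.trans_le hA
  have hB0 : 0 < B := hm0.trans_le hB
  set S : ℝ → Prop := fun k => (∀ x : EE n, k ≤ ‖x‖ ^ 2 → kel A k u x ≤ u x) ∧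
    (∀ x : EE n, k ≤ ‖x‖ ^ 2 → kel B k v x ≤ v x) with hSdef
  set s : Set ℝ := {k | ∀ j, 0 ≤ j → j ≤ k → S j} with hsdef
  have hPd : ∀ k ∈ s, (∀ x : EE n, ‖x‖ ^ 2 ≤ k → 0 ≤ Pd A u x) ∧
      (∀ x : EE n, ‖x‖ ^ 2 ≤ k → 0 ≤ Pd B v x) := by
    intro k hk
    constructor
    · intro x hx
      rcases eq_or_ne x 0 with rfl | hx0
      · simpa [Pd] using (mul_pos hA0 (hu0 0)).le
      · exact Pd_nonneg hu hx0 (hk _ (by positivity) hx).1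
    · intro x hx
      rcases eq_or_ne x 0 with rfl | hx0
      · simpa [Pd] using (mul_pos hB0 (hv0 0)).le
      · exact Pd_nonneg hv hx0 (hk _ (by positivity) hx).2
  have hpos : ∀ {w : EE n → ℝ} {C k : ℝ}, ContDiff ℝ 2 w → 0 < C → 0 ≤ k →
      (∀ x : EE n, k ≤ ‖x‖ ^ 2 → kel C k w x ≤ w x) →
      (∀ x : EE n, k < ‖x‖ ^ 2 → lap (fun y => w y - kel C k w y) x < 0) →
      ∀ x : EE n, k < ‖x‖ ^ 2 → 0 < w x - kel C k w x := by
    intro w C k hw hC hk h1 h2 x hx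
    refine lt_of_le_of_ne (by linarith [h1 x hx.le]) fun h0 => ?_
    have hx0 : x ≠ 0 := by
      rintro rfl
      simp at hx; linarith
    have hloc : IsLocalMin (fun y => w y - kel C k w y) x := by
      have ho : IsOpen {y : EE n | k < ‖y‖ ^ 2} := isOpen_lt continuous_const (by fun_prop)
      filter_upwards [ho.mem_nhds hx] with y hy
      rw [← h0]
      have hy' : k < ‖y‖ ^ 2 := hy
      linarith [h1 y hy'.le]
    have := lap_nonneg_of_min (hw.contDiffAt.sub (kel_contDiffAt' hw hC hk hx0)) hloc
    exact absurd (h2 x hx) (not_lt.2 this)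
  have hsub : Set.Icc 0 (‖x‖ ^ 2) ⊆ s := by
    refine IsClosed.Icc_subset_of_forall_mem_nhdsWithin ?_ ?_ ?_
    · refine IsSeqClosed.isClosed ?_
      intro a l ha hl
      have hl1 : 0 ≤ l := ge_of_tendsto' hl fun i => (ha i).2.1
      have hl2 : l ≤ ‖x‖ ^ 2 := le_of_tendsto' hl fun i => (ha i).2.2
      refine ⟨?_, hl1, hl2⟩
      intro j hj0 hjl
      rcases hjl.eq_or_lt with rfl | hjl
      · exact ⟨kel_limit hu hu0 hA0 hj0 hl fun i => ((ha i).1 _ (ha i).2.1 le_rfl).1,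
          kel_limit hv hv0 hB0 hj0 hl fun i => ((ha i).1 _ (ha i).2.1 le_rfl).2⟩
      · obtain ⟨i, hi⟩ := (hl.eventually_const_lt hjl).exists
        exact (ha i).1 j hj0 hi.le
    · intro j h0 h1
      obtain rfl : j = 0 := le_antisymm h1 h0
      exact ⟨fun y _ => by rw [kel_zero hA0]; exact (hu0 y).le,
        fun y _ => by rw [kel_zero hB0]; exact (hv0 y).le⟩
    · rintro k ⟨hks, hk0, -⟩
      have hSk := hks k hk0 le_rfl
      obtain ⟨hPu, hPv⟩ := hPd k hks
      have hlapu := lap_neg hu hv0 hlu hp hA0 (hm ▸ hA) hAB hk0 hSk.2 hPu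
      have hlapv := lap_neg hv hu0 hlv hq hB0 (hm ▸ hB) hBA hk0 hSk.1 hPv
      have o1 := open_step hu hm hm0 hA hk0 hu0 (hpos hu hA0 hk0 hSk.1 hlapu) hlapu hPu
      have o2 := open_step hv hm hm0 hB hk0 hv0 (hpos hv hB0 hk0 hSk.2 hlapv) hlapv hPv
      obtain ⟨b, hb, hbs⟩ := (mem_nhdsGT_iff_exists_Ioo_subset).1 (o1.and o2)
      refine Filter.mem_of_superset (Ioo_mem_nhdsGT hb) ?_
      intro l hl j hj0 hjl
      rcases le_or_gt j k with hjk | hjk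
      · exact hks j hj0 hjk
      · exact hbs ⟨hjk, hjl.trans_lt hl.2⟩
  have hmem : ‖x‖ ^ 2 ∈ s := hsub ⟨by positivity, le_rfl⟩
  exact (hPd _ hmem).1 x le_rfl

lemma lap_translate {n : ℕ} (u : EE n → ℝ) (z x : EE n) :
    lap (fun y => u (y + z)) x = lap u (x + z) := by
  unfold lap
  refine Finset.sum_congr rfl fun i _ => ?_
  have : (fun y => fderiv ℝ (fun y => u (y + z)) y (EuclideanSpace.single i 1)) =
      fun y => (fun w => fderiv ℝ u w (EuclideanSpace.single i 1)) (y + z) := by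
    funext y
    rw [fderiv_comp_add_right]
  rw [this, fderiv_comp_add_right (f := fun w => fderiv ℝ u w (EuclideanSpace.single i 1))]

lemma numeric {N p q : ℝ} (hN : 5 ≤ N) (hp : 1 ≤ p) (hq : 1 ≤ q) (hqp : q ≤ p)
    (hsub : 1 - 2 / N + 4 / N ^ 2 ≤ 1 / (p + 1) + 1 / (q + 1)) :
    ∃ A B : ℝ, (N - 2) / 2 ≤ A ∧ (N - 2) / 2 ≤ B ∧ p * B < A + 2 ∧ q * A < B + 2 := by
  have hp1 : 0 < p + 1 := by linarith
  have hq1 : 0 < q + 1 := by linarith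
  have hN0 : 0 < N := by linarith
  have e1 : (N ^ 2 - 2 * N + 4) * ((p + 1) * (q + 1)) ≤ N ^ 2 * (p + q + 2) := by
    have l : 1 - 2 / N + 4 / N ^ 2 = (N ^ 2 - 2 * N + 4) / N ^ 2 := by field_simp
    have r : 1 / (p + 1) + 1 / (q + 1) = (p + q + 2) / ((p + 1) * (q + 1)) := by
      field_simp; ring
    rw [l, r, div_le_div_iff₀ (by positivity) (by positivity)] at hsub
    linarith
  have e2 : (N ^ 2 - 4 * N + 8) * (p + 1) ≤ 2 * N ^ 2 := by
    have h1 : 1 / (q + 1) ≤ 1 / 2 := one_div_le_one_div_of_le (by norm_num) (by linarith)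
    have h2 : (N ^ 2 - 4 * N + 8) / (2 * N ^ 2) ≤ 1 / (p + 1) := by
      have : (N ^ 2 - 4 * N + 8) / (2 * N ^ 2) = 1 - 2 / N + 4 / N ^ 2 - 1 / 2 := by
        field_simp; ring
      linarith
    rw [div_le_div_iff₀ (by positivity) (by positivity)] at h2
    linarith
  have e3 : (N - 2) / 2 * (p * q - 1) < 2 * (q + 1) := by
    have h1 : N ^ 2 * (p * q - 1) ≤ (2 * N - 4) * ((p + 1) * (q + 1)) := by nlinarith
    have h2 : (N - 2) ^ 2 * (p + 1) < 2 * N ^ 2 := by nlinarith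
    have h3 : (N - 2) / 2 * (N ^ 2 * (p * q - 1)) ≤ (N - 2) / 2 * ((2 * N - 4) * ((p + 1) * (q + 1))) :=
      mul_le_mul_of_nonneg_left h1 (by linarith)
    have h4 := mul_lt_mul_of_pos_right h2 hq1
    have h5 : N ^ 2 * ((N - 2) / 2 * (p * q - 1)) < N ^ 2 * (2 * (q + 1)) := by nlinarith
    exact lt_of_mul_lt_mul_left h5 (by positivity)
  have hm0 : 0 < (N - 2) / 2 := by linarith
  generalize (N - 2) / 2 = m at *
  refine ⟨m * (p + 1) / (q + 1), m, ?_, le_rfl, ?_, ?_⟩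
  · rw [le_div_iff₀ hq1]; nlinarith
  · have : p * m - 2 < m * (p + 1) / (q + 1) := by
      rw [lt_div_iff₀ hq1]; nlinarith
    linarith
  · rw [← mul_div_assoc, div_lt_iff₀ hq1]; nlinarith


theorem laneEmden_conjecture_new_region (n : ℕ) (hn : 5 ≤ n) (p q : ℝ)
    (hp : 1 ≤ p) (hq : 1 ≤ q)
    (hsub : 1 - 2 / (n : ℝ) + 4 / (n : ℝ) ^ 2 ≤ 1 / (p + 1) + 1 / (q + 1)) :
    ¬ ∃ u v : EuclideanSpace ℝ (Fin n) → ℝ,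
        ContDiff ℝ 2 u ∧ ContDiff ℝ 2 v ∧
        (∀ x, 0 < u x) ∧ (∀ x, 0 < v x) ∧
        (∀ x, -lap u x = v x ^ p) ∧ (∀ x, -lap v x = u x ^ q) := by
  rintro ⟨u, v, hu, hv, hu0, hv0, hlu, hlv⟩
  have hN : (5 : ℝ) ≤ n := by exact_mod_cast hn
  obtain ⟨A, B, hA, hB, hAB, hBA⟩ : ∃ A B : ℝ, ((n : ℝ) - 2) / 2 ≤ A ∧ ((n : ℝ) - 2) / 2 ≤ B ∧
      p * B < A + 2 ∧ q * A < B + 2 := by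
    rcases le_total q p with h | h
    · exact numeric hN hp hq h hsub
    · obtain ⟨B, A, h1, h2, h3, h4⟩ := numeric hN hq hp h (by linarith)
      exact ⟨A, B, h2, h1, h4, h3⟩
  -- the scaling field about any centre keeps a sign
  have key : ∀ z x : EE n, 0 ≤ A * u z + fderiv ℝ u z x := by
    intro z x
    have ht : ContDiff ℝ 2 (fun y : EE n => y + (z - x)) := contDiff_id.add contDiff_const
    have := core (u := fun y => u (y + (z - x))) (v := fun y => v (y + (z - x)))
      (hu.comp ht) (hv.comp ht) (fun _ => hu0 _) (fun _ => hv0 _)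
      (fun y => by rw [lap_translate]; exact hlu _) (fun y => by rw [lap_translate]; exact hlv _)
      hp hq rfl (by linarith) hA hB hAB hBA x
    rw [Pd, fderiv_comp_add_right] at this
    simpa using this
  have hgrad : ∀ z, fderiv ℝ u z = 0 := by
    intro z
    ext x
    have hnn : ∀ y : EE n, 0 ≤ fderiv ℝ u z y := by
      intro y
      by_contra hneg
      push Not at hneg
      have h1 := key z ((-(A * u z + 1) / fderiv ℝ u z y) • y)
      rw [map_smul, smul_eq_mul, div_mul_cancel₀ _ hneg.ne] at h1
      linarith
    have h1 := hnn x
    have h2 := hnn (-x)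
    rw [map_neg] at h2
    simp only [zero_apply]
    linarith
  have hl : lap u 0 = 0 := by simp [lap, hgrad]
  have h1 := hlu 0
  have h2 := Real.rpow_pos_of_pos (hv0 0) p
  linarith
end

section
/- Let p ≥ 1 and q ≥ 1. For each real constant c₀ > 2 there exists an integer N(c₀) such that for every integer n ≥ N(c₀), if 1/(p+1) + 1/(q+1) ≥ 1 − 2/n + c₀/n², then the Lane–Emden system −Δu = v^p, −Δv = u^q admits no positive classical solution on ℝ^n. -/
open MeasureTheory Real
open scoped InnerProductSpace

namespace LaneEmdenAux

open Filter Topology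
open scoped Convolution ContDiff

/-- Partial derivative. -/
noncomputable def pd {n : ℕ} (i : Fin n) (f : EuclideanSpace ℝ (Fin n) → ℝ)
    (x : EuclideanSpace ℝ (Fin n)) : ℝ :=
  fderiv ℝ f x (EuclideanSpace.single i 1)

variable {n : ℕ}

theorem lap_eq (f : EuclideanSpace ℝ (Fin n) → ℝ) (x : EuclideanSpace ℝ (Fin n)) :
    lap f x = ∑ i, pd i (pd i f) x := rfl

theorem contDiff_pd {f : EuclideanSpace ℝ (Fin n) → ℝ} {m k : WithTop ℕ∞} (i : Fin n)
    (hf : ContDiff ℝ k f) (h : m + 1 ≤ k) : ContDiff ℝ m (pd i f) := by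
  unfold pd
  exact (hf.fderiv_right h).clm_apply contDiff_const

theorem cont_pd {f : EuclideanSpace ℝ (Fin n) → ℝ} (i : Fin n)
    (hf : ContDiff ℝ 1 f) : Continuous (pd i f) :=
  (contDiff_pd (m := 0) i hf (by simp)).continuous

theorem pd_mul {f g : EuclideanSpace ℝ (Fin n) → ℝ} (i : Fin n)
    (hf : ContDiff ℝ 1 f) (hg : ContDiff ℝ 1 g) :
    pd i (fun x => f x * g x) = fun x => pd i f x * g x + f x * pd i g x := by
  funext x
  unfold pd
  rw [fderiv_fun_mul (hf.differentiable (by simp) x) (hg.differentiable (by simp) x)]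
  simp
  ring

theorem pd_add {f g : EuclideanSpace ℝ (Fin n) → ℝ} (i : Fin n)
    (hf : ContDiff ℝ 1 f) (hg : ContDiff ℝ 1 g) :
    pd i (fun x => f x + g x) = fun x => pd i f x + pd i g x := by
  funext x
  unfold pd
  rw [fderiv_fun_add (hf.differentiable (by simp) x) (hg.differentiable (by simp) x)]
  simp

theorem pd_sub {f g : EuclideanSpace ℝ (Fin n) → ℝ} (i : Fin n)
    (hf : ContDiff ℝ 1 f) (hg : ContDiff ℝ 1 g) :
    pd i (fun x => f x - g x) = fun x => pd i f x - pd i g x := by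
  funext x
  unfold pd
  rw [fderiv_fun_sub (hf.differentiable (by simp) x) (hg.differentiable (by simp) x)]
  simp

theorem pd_sum {ι : Type*} (s : Finset ι) {f : ι → EuclideanSpace ℝ (Fin n) → ℝ} (i : Fin n)
    (hf : ∀ j, ContDiff ℝ 1 (f j)) :
    pd i (fun x => ∑ j ∈ s, f j x) = fun x => ∑ j ∈ s, pd i (f j) x := by
  funext x
  unfold pd
  rw [fderiv_fun_sum (fun j _ => (hf j).differentiable (by simp) x)]
  simp

theorem pd_const (c : ℝ) (i : Fin n) :
    pd i (fun _ : EuclideanSpace ℝ (Fin n) => c) = fun _ => 0 := by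
  funext x
  simp [pd]

theorem pd_comp {f : EuclideanSpace ℝ (Fin n) → ℝ} {φ : ℝ → ℝ} {d : ℝ} (i : Fin n)
    (x : EuclideanSpace ℝ (Fin n))
    (hf : ContDiff ℝ 1 f) (hφ : HasDerivAt φ d (f x)) :
    pd i (fun x => φ (f x)) x = d * pd i f x := by
  unfold pd
  have := hφ.comp_hasFDerivAt x (hf.differentiable (by simp) x).hasFDerivAt
  have h2 : HasFDerivAt (fun x => φ (f x)) (d • fderiv ℝ f x) x := this
  rw [h2.fderiv]
  simp

theorem pd_comm {f : EuclideanSpace ℝ (Fin n) → ℝ} (hf : ContDiff ℝ 2 f) (i j : Fin n)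
    (x : EuclideanSpace ℝ (Fin n)) : pd i (pd j f) x = pd j (pd i f) x := by
  have hd : DifferentiableAt ℝ (fderiv ℝ f) x :=
    (hf.fderiv_right (m := 1) (by norm_num)).differentiable (by simp) x
  have key : ∀ a b : EuclideanSpace ℝ (Fin n),
      fderiv ℝ (fun y => fderiv ℝ f y a) x b = fderiv ℝ (fderiv ℝ f) x b a := by
    intro a b
    rw [fderiv_clm_apply hd (differentiableAt_const _)]
    simp
  have hs : IsSymmSndFDerivAt ℝ f x := hf.contDiffAt.isSymmSndFDerivAt (by simp)
  change fderiv ℝ (fun y => fderiv ℝ f y _) x _ = fderiv ℝ (fun y => fderiv ℝ f y _) x _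
  rw [key, key]
  exact hs _ _

theorem pd_pd_nonpos {f : EuclideanSpace ℝ (Fin n) → ℝ} (hf : ContDiff ℝ 2 f) (i : Fin n)
    {x : EuclideanSpace ℝ (Fin n)} (h : IsLocalMax f x) : pd i (pd i f) x ≤ 0 := by
  by_contra hcon
  push Not at hcon
  set e : EuclideanSpace ℝ (Fin n) := EuclideanSpace.single i 1 with he
  have hline : ∀ t : ℝ, HasDerivAt (fun t : ℝ => x + t • e) e t := by
    intro t
    simpa using ((hasDerivAt_id t).smul_const e).const_add x
  have hd : ∀ g : EuclideanSpace ℝ (Fin n) → ℝ, ContDiff ℝ 1 g →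
      deriv (fun t : ℝ => g (x + t • e)) = fun t : ℝ => pd i g (x + t • e) := by
    intro g hg
    funext t
    have := ((hg.differentiable (by simp) (x + t • e)).hasFDerivAt).comp_hasDerivAt t (hline t)
    exact this.deriv
  have h1 := hd f (hf.of_le (by norm_num))
  have h2 := hd (pd i f) (contDiff_pd i hf (by norm_num))
  have hcont : Continuous (fun t : ℝ => x + t • e) := by fun_prop
  have hmax : IsLocalMax (fun t : ℝ => f (x + t • e)) 0 := by
    have : Tendsto (fun t : ℝ => x + t • e) (𝓝 0) (𝓝 x) := by
      have := hcont.tendsto 0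
      simpa using this
    have h3 := this.eventually h
    unfold IsLocalMax IsMaxFilter
    simpa using h3
  have hd0 : deriv (fun t : ℝ => f (x + t • e)) 0 = 0 := hmax.deriv_eq_zero
  have hdd : deriv (deriv (fun t : ℝ => f (x + t • e))) 0 > 0 := by
    rw [h1, h2]
    simpa using hcon
  have hmin := isLocalMin_of_deriv_deriv_pos hdd hd0
    ((hf.continuous.comp hcont).continuousAt)
  have heq : (fun t : ℝ => f (x + t • e)) =ᶠ[𝓝 0] fun _ => f (x + (0:ℝ) • e) := by
    filter_upwards [hmax, hmin] with t ht1 ht2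
    exact le_antisymm ht1 ht2
  have h4 := heq.deriv.deriv_eq
  rw [h4] at hdd
  simp at hdd

theorem pd_eq_zero {f : EuclideanSpace ℝ (Fin n) → ℝ} (i : Fin n)
    {x : EuclideanSpace ℝ (Fin n)} (h : IsLocalMax f x) : pd i f x = 0 := by
  unfold pd
  rw [h.fderiv_eq_zero]
  simp

theorem lap_nonpos {f : EuclideanSpace ℝ (Fin n) → ℝ} (hf : ContDiff ℝ 2 f)
    {x : EuclideanSpace ℝ (Fin n)} (h : IsLocalMax f x) : lap f x ≤ 0 := by
  rw [lap_eq]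
  exact Finset.sum_nonpos fun i _ => pd_pd_nonpos hf i h

/-- squared distance -/
theorem pd_sq (c : EuclideanSpace ℝ (Fin n)) (i : Fin n) :
    pd i (fun x => ‖x - c‖ ^ 2) = fun x => 2 * (x i - c i) := by
  funext x
  unfold pd
  have h : HasFDerivAt (fun x : EuclideanSpace ℝ (Fin n) => ‖x - c‖ ^ 2)
      (2 • (innerSL ℝ (x - c))) x := by
    have := ((hasFDerivAt_id x).sub_const c).norm_sq
    simpa using this
  rw [h.fderiv]
  simp [EuclideanSpace.inner_single_right]

theorem pd_coord (c : ℝ) (i : Fin n) :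
    pd i (fun x => 2 * (x i - c)) = fun _ => 2 := by
  funext x
  unfold pd
  have h : HasFDerivAt (fun x : EuclideanSpace ℝ (Fin n) => 2 * (x i - c))
      ((2:ℝ) • (EuclideanSpace.proj i : EuclideanSpace ℝ (Fin n) →L[ℝ] ℝ)) x := by
    have h0 : HasFDerivAt (fun x : EuclideanSpace ℝ (Fin n) => x i)
      (EuclideanSpace.proj i : EuclideanSpace ℝ (Fin n) →L[ℝ] ℝ) x :=
      (EuclideanSpace.proj i : EuclideanSpace ℝ (Fin n) →L[ℝ] ℝ).hasFDerivAt
    exact (h0.sub_const c).const_mul 2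
  rw [h.fderiv]
  simp

theorem contDiff_sq (c : EuclideanSpace ℝ (Fin n)) {m : WithTop ℕ∞} :
    ContDiff ℝ m (fun x : EuclideanSpace ℝ (Fin n) => ‖x - c‖ ^ 2) := by
  exact (contDiff_id.sub contDiff_const).norm_sq ℝ

/-- Mollification. -/
noncomputable def moll (φ : ContDiffBump (0 : EuclideanSpace ℝ (Fin n)))
    (g : EuclideanSpace ℝ (Fin n) → ℝ) : EuclideanSpace ℝ (Fin n) → ℝ :=
  (φ.normed volume ⋆[ContinuousLinearMap.lsmul ℝ ℝ, volume] g)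

theorem moll_contDiff (φ : ContDiffBump (0 : EuclideanSpace ℝ (Fin n)))
    {g : EuclideanSpace ℝ (Fin n) → ℝ} (hg : Continuous g) : ContDiff ℝ ∞ (moll φ g) := by
  exact φ.hasCompactSupport_normed.contDiff_convolution_left _ φ.contDiff_normed
    hg.locallyIntegrable

theorem moll_tendsto {φ : ℕ → ContDiffBump (0 : EuclideanSpace ℝ (Fin n))} {l : Filter ℕ}
    (hφ : Tendsto (fun i => (φ i).rOut) l (𝓝 0))
    {g : EuclideanSpace ℝ (Fin n) → ℝ} (hg : Continuous g)
    {k : ℕ → EuclideanSpace ℝ (Fin n)} {x : EuclideanSpace ℝ (Fin n)} (hk : Tendsto k l (𝓝 x)) :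
    Tendsto (fun i => moll (φ i) g (k i)) l (𝓝 (g x)) := by
  exact ContDiffBump.convolution_tendsto_right (g := fun _ => g) hφ
    (Eventually.of_forall fun _ => hg.aestronglyMeasurable)
    ((hg.tendsto x).comp tendsto_snd) hk

theorem pd_moll (φ : ContDiffBump (0 : EuclideanSpace ℝ (Fin n)))
    {g : EuclideanSpace ℝ (Fin n) → ℝ} (hg : ContDiff ℝ 1 g) (i : Fin n) :
    pd i (moll φ g) = moll φ (pd i g) := by
  funext x
  have hφc : Continuous (φ.normed volume : EuclideanSpace ℝ (Fin n) → ℝ) :=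
    φ.continuous_normed
  have hφs : HasCompactSupport (φ.normed volume : EuclideanSpace ℝ (Fin n) → ℝ) :=
    φ.hasCompactSupport_normed
  have hdg : Continuous (fderiv ℝ g) := hg.continuous_fderiv (by simp)
  have hmain : HasFDerivAt (moll φ g)
      (∫ t, φ.normed volume t • fderiv ℝ g (x - t)) x := by
    obtain ⟨C, hC⟩ := ((isCompact_closedBall x 1).prod hφs.isCompact).exists_bound_of_continuousOn
      (f := fun z : EuclideanSpace ℝ (Fin n) × EuclideanSpace ℝ (Fin n) =>
        fderiv ℝ g (z.1 - z.2)) (by fun_prop)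
    have hFc : ∀ y, Continuous fun t => φ.normed volume t * g (y - t) := by
      intro y
      have := hg.continuous
      fun_prop
    refine hasFDerivAt_integral_of_dominated_of_fderiv_le
      (F := fun y t => φ.normed volume t * g (y - t))
      (F' := fun y t => φ.normed volume t • fderiv ℝ g (y - t))
      (bound := fun t => C * φ.normed volume t)
      (Metric.closedBall_mem_nhds x one_pos)
      (Eventually.of_forall fun y => (hFc y).aestronglyMeasurable)
      ((hFc x).integrable_of_hasCompactSupport hφs.mul_right) ?_ ?_ ?_ ?_
    · exact Continuous.aestronglyMeasurable (by fun_prop)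
    · refine Eventually.of_forall fun t y hy => ?_
      by_cases ht : t ∈ tsupport (φ.normed volume : EuclideanSpace ℝ (Fin n) → ℝ)
      · rw [norm_smul, mul_comm]
        have h0 : 0 ≤ φ.normed volume t := φ.nonneg_normed t
        rw [Real.norm_of_nonneg h0]
        exact mul_le_mul_of_nonneg_right (hC (y, t) ⟨hy, ht⟩) h0
      · rw [image_eq_zero_of_notMem_tsupport ht]
        simp
    · exact (hφc.integrable_of_hasCompactSupport hφs).const_mul C
    · refine Eventually.of_forall fun t y _ => ?_
      have h1 : HasFDerivAt (fun y => g (y - t)) (fderiv ℝ g (y - t)) y := by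
        have := ((hg.differentiable (by simp) (y - t)).hasFDerivAt).comp y
          ((hasFDerivAt_id y).sub_const t)
        rw [ContinuousLinearMap.comp_id] at this
        exact this
      exact h1.const_mul _
  unfold pd
  rw [hmain.fderiv, ContinuousLinearMap.integral_apply]
  · rfl
  · refine Continuous.integrable_of_hasCompactSupport (by fun_prop) ?_
    exact hφs.smul_right

/-- Squared norm of the gradient. -/
noncomputable def grad2 (w : EuclideanSpace ℝ (Fin n) → ℝ) (x : EuclideanSpace ℝ (Fin n)) : ℝ :=
  ∑ j, pd j w x * pd j w x

theorem contDiff_grad2 {w : EuclideanSpace ℝ (Fin n) → ℝ} {m k : WithTop ℕ∞}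
    (hw : ContDiff ℝ k w) (h : m + 1 ≤ k) : ContDiff ℝ m (grad2 w) := by
  unfold grad2
  exact ContDiff.sum fun j _ => (contDiff_pd j hw h).mul (contDiff_pd j hw h)

theorem lap_mul {f g : EuclideanSpace ℝ (Fin n) → ℝ} (hf : ContDiff ℝ 2 f) (hg : ContDiff ℝ 2 g)
    (x : EuclideanSpace ℝ (Fin n)) :
    lap (fun x => f x * g x) x = lap f x * g x + 2 * (∑ k, pd k f x * pd k g x)
      + f x * lap g x := by
  have hf1 : ContDiff ℝ 1 f := hf.of_le (by norm_num)
  have hg1 : ContDiff ℝ 1 g := hg.of_le (by norm_num)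
  simp only [lap_eq, Finset.sum_mul, Finset.mul_sum, ← Finset.sum_add_distrib]
  refine Finset.sum_congr rfl fun k _ => ?_
  have hfk : ContDiff ℝ 1 (pd k f) := contDiff_pd k hf (by norm_num)
  have hgk : ContDiff ℝ 1 (pd k g) := contDiff_pd k hg (by norm_num)
  rw [pd_mul k hf1 hg1, pd_add k (hfk.mul hg1) (hf1.mul hgk), pd_mul k hfk hg1, pd_mul k hf1 hgk]
  ring

theorem lap_sub {f g : EuclideanSpace ℝ (Fin n) → ℝ} (hf : ContDiff ℝ 2 f) (hg : ContDiff ℝ 2 g)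
    (x : EuclideanSpace ℝ (Fin n)) :
    lap (fun x => f x - g x) x = lap f x - lap g x := by
  have hf1 : ContDiff ℝ 1 f := hf.of_le (by norm_num)
  have hg1 : ContDiff ℝ 1 g := hg.of_le (by norm_num)
  simp only [lap_eq, ← Finset.sum_sub_distrib]
  refine Finset.sum_congr rfl fun k _ => ?_
  have hfk : ContDiff ℝ 1 (pd k f) := contDiff_pd k hf (by norm_num)
  have hgk : ContDiff ℝ 1 (pd k g) := contDiff_pd k hg (by norm_num)
  rw [pd_sub k hf1 hg1, pd_sub k hfk hgk]

theorem pd_grad2 {w : EuclideanSpace ℝ (Fin n) → ℝ} (hw : ContDiff ℝ 2 w) (k : Fin n) :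
    pd k (grad2 w) = fun x => ∑ j, 2 * (pd j w x * pd k (pd j w) x) := by
  have hj : ∀ j, ContDiff ℝ 1 (pd j w) := fun j => contDiff_pd j hw (by norm_num)
  unfold grad2
  rw [pd_sum Finset.univ k (f := fun j x => pd j w x * pd j w x) (fun j => (hj j).mul (hj j))]
  funext x
  refine Finset.sum_congr rfl fun j _ => ?_
  rw [pd_mul k (hj j) (hj j)]
  ring

theorem lap_grad2 {w : EuclideanSpace ℝ (Fin n) → ℝ} (hw : ContDiff ℝ 3 w)
    (x : EuclideanSpace ℝ (Fin n)) :
    lap (grad2 w) x = 2 * (∑ k, ∑ j, pd k (pd j w) x ^ 2)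
      + 2 * ∑ j, pd j w x * pd j (lap w) x := by
  have hw2 : ContDiff ℝ 2 w := hw.of_le (by norm_num)
  have hj2 : ∀ j, ContDiff ℝ 2 (pd j w) := fun j => contDiff_pd j hw (by norm_num)
  have hj : ∀ j, ContDiff ℝ 1 (pd j w) := fun j => (hj2 j).of_le (by norm_num)
  have hjk : ∀ j k, ContDiff ℝ 1 (pd k (pd j w)) := fun j k => contDiff_pd k (hj2 j) (by norm_num)
  have h1 : ∀ k, pd k (pd k (grad2 w)) x
      = 2 * (∑ j, pd k (pd j w) x ^ 2) + 2 * ∑ j, pd j w x * pd k (pd k (pd j w)) x := by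
    intro k
    rw [pd_grad2 hw2 k,
      pd_sum Finset.univ k (f := fun j x => 2 * (pd j w x * pd k (pd j w) x))
        (fun j => contDiff_const.mul ((hj j).mul (hjk j k))),
      Finset.mul_sum, Finset.mul_sum, ← Finset.sum_add_distrib]
    refine Finset.sum_congr rfl fun j _ => ?_
    rw [pd_mul k contDiff_const ((hj j).mul (hjk j k)), pd_const, pd_mul k (hj j) (hjk j k)]
    ring
  have h2 : ∀ j, pd j (lap w) x = ∑ k, pd k (pd k (pd j w)) x := by
    intro j
    have e : lap w = fun x => ∑ k, pd k (pd k w) x := by funext x; rfl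
    rw [e, pd_sum Finset.univ j (f := fun k x => pd k (pd k w) x) (fun k => hjk k k)]
    refine Finset.sum_congr rfl fun k _ => ?_
    rw [pd_comm (hj2 k) j k]
    congr 1
    funext y
    exact pd_comm hw2 j k y
  rw [lap_eq]
  simp only [h1, h2, Finset.sum_add_distrib, ← Finset.mul_sum]
  congr 2
  rw [Finset.sum_comm]
  simp only [Finset.mul_sum]

theorem lap_moll (φ : ContDiffBump (0 : EuclideanSpace ℝ (Fin n)))
    {g : EuclideanSpace ℝ (Fin n) → ℝ} (hg : ContDiff ℝ 2 g) :
    lap (moll φ g) = moll φ (lap g) := by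
  funext x
  have h1 : lap (moll φ g) x = ∑ i, moll φ (pd i (pd i g)) x := by
    rw [lap_eq]
    refine Finset.sum_congr rfl fun i _ => ?_
    rw [pd_moll φ (hg.of_le (by norm_num)), pd_moll φ (contDiff_pd i hg (by norm_num))]
  rw [h1]
  have hc : ∀ i, Continuous (pd i (pd i g)) := fun i => cont_pd i (contDiff_pd i hg (by norm_num))
  have hφc : Continuous (φ.normed volume : EuclideanSpace ℝ (Fin n) → ℝ) :=
    φ.continuous_normed
  have hφs : HasCompactSupport (φ.normed volume : EuclideanSpace ℝ (Fin n) → ℝ) :=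
    φ.hasCompactSupport_normed
  change ∑ i, ∫ t, φ.normed volume t * pd i (pd i g) (x - t)
    = ∫ t, φ.normed volume t * ∑ i, pd i (pd i g) (x - t)
  rw [← integral_finsetSum]
  · simp only [Finset.mul_sum]
  · intro i _
    refine Continuous.integrable_of_hasCompactSupport ?_ hφs.mul_right
    have := hc i
    fun_prop

/-- Penalisation has vanishing Laplacian at the centre. -/
theorem lap_pen (c : EuclideanSpace ℝ (Fin n)) :
    lap (fun x => ‖x - c‖ ^ 2 * ‖x - c‖ ^ 2) c = 0 := by
  rw [lap_mul (contDiff_sq c) (contDiff_sq c)]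
  simp [pd_sq]

theorem bochner_max {w η : EuclideanSpace ℝ (Fin n) → ℝ} (hw : ContDiff ℝ 2 w)
    (hF : ContDiff ℝ 1 (lap w)) (hη : ContDiff ℝ 2 η) {x₀ : EuclideanSpace ℝ (Fin n)}
    (hmax : IsLocalMax (fun x => η x * grad2 w x) x₀) :
    lap η x₀ * grad2 w x₀ + 2 * (∑ k, pd k η x₀ * ∑ j, 2 * (pd j w x₀ * pd k (pd j w) x₀))
      + η x₀ * (2 * (∑ k, ∑ j, pd k (pd j w) x₀ ^ 2)
      + 2 * ∑ j, pd j w x₀ * pd j (lap w) x₀) ≤ 0 := by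
  have hw1 : ContDiff ℝ 1 w := hw.of_le (by norm_num)
  have hη1 : ContDiff ℝ 1 η := hη.of_le (by norm_num)
  have hj : ∀ j, ContDiff ℝ 1 (pd j w) := fun j => contDiff_pd j hw (by norm_num)
  obtain ⟨r, hr, hball⟩ := Metric.nhds_basis_closedBall.eventually_iff.1 hmax
  let φ : ℕ → ContDiffBump (0 : EuclideanSpace ℝ (Fin n)) := fun i =>
    ⟨1 / ((i : ℝ) + 1), 2 / ((i : ℝ) + 1), by positivity, by gcongr; norm_num⟩
  let l : Ultrafilter ℕ := hyperfilter ℕ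
  have hφ : Tendsto (fun i => (φ i).rOut) (l : Filter ℕ) (𝓝 0) := by
    have : Tendsto (fun i : ℕ => 2 * (1 / ((i : ℝ) + 1))) atTop (𝓝 (2 * 0)) :=
      tendsto_one_div_add_atTop_nhds_zero_nat.const_mul 2
    have h2 := this.mono_left Nat.hyperfilter_le_atTop
    refine (h2.congr fun i => ?_).trans (by simp)
    change _ = 2 / ((i : ℝ) + 1)
    ring
  let W : ℕ → EuclideanSpace ℝ (Fin n) → ℝ := fun i => moll (φ i) w
  have hW : ∀ i, ContDiff ℝ ∞ (W i) := fun i => moll_contDiff (φ i) hw.continuous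
  have hW3 : ∀ i, ContDiff ℝ 3 (W i) := fun i => by exact_mod_cast contDiff_infty.1 (hW i) 3
  let pen : EuclideanSpace ℝ (Fin n) → ℝ := fun x => ‖x - x₀‖ ^ 2 * ‖x - x₀‖ ^ 2
  have hpen3 : ContDiff ℝ 3 pen := (contDiff_sq x₀).mul (contDiff_sq x₀)
  have hpen : ContDiff ℝ 2 pen := hpen3.of_le (by norm_num)
  have hG2 : ∀ i, ContDiff ℝ 2 (grad2 (W i)) := fun i => contDiff_grad2 (hW3 i) (by norm_num)
  let Ψ : ℕ → EuclideanSpace ℝ (Fin n) → ℝ := fun i x => η x * grad2 (W i) x - pen x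
  have hΨ : ∀ i, ContDiff ℝ 2 (Ψ i) := fun i => (hη.mul (hG2 i)).sub hpen
  have hex : ∀ i, ∃ y ∈ Metric.closedBall x₀ r, IsMaxOn (Ψ i) (Metric.closedBall x₀ r) y :=
    fun i => (isCompact_closedBall x₀ r).exists_isMaxOn ⟨x₀, by simp [hr.le]⟩
      (hΨ i).continuous.continuousOn
  choose y hyball hymax using hex
  -- limit of derivatives
  have hpdW : ∀ i j, pd j (W i) = moll (φ i) (pd j w) := fun i j => pd_moll (φ i) hw1 j
  have lim1 : ∀ {k : ℕ → EuclideanSpace ℝ (Fin n)} {x}, Tendsto k l (𝓝 x) → ∀ j,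
      Tendsto (fun i => pd j (W i) (k i)) l (𝓝 (pd j w x)) := by
    intro k x hk j
    simp only [hpdW]
    exact moll_tendsto hφ (cont_pd j hw1) hk
  have lim2 : ∀ {k : ℕ → EuclideanSpace ℝ (Fin n)} {x}, Tendsto k l (𝓝 x) → ∀ m j,
      Tendsto (fun i => pd m (pd j (W i)) (k i)) l (𝓝 (pd m (pd j w) x)) := by
    intro k x hk m j
    have : ∀ i, pd m (pd j (W i)) = moll (φ i) (pd m (pd j w)) := by
      intro i
      rw [hpdW, pd_moll (φ i) (hj j) m]
    simp only [this]
    exact moll_tendsto hφ (cont_pd m (hj j)) hk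
  have lim3 : ∀ {k : ℕ → EuclideanSpace ℝ (Fin n)} {x}, Tendsto k l (𝓝 x) → ∀ j,
      Tendsto (fun i => pd j (lap (W i)) (k i)) l (𝓝 (pd j (lap w) x)) := by
    intro k x hk j
    have : ∀ i, pd j (lap (W i)) = moll (φ i) (pd j (lap w)) := by
      intro i
      rw [lap_moll (φ i) hw, pd_moll (φ i) hF j]
    simp only [this]
    exact moll_tendsto hφ (cont_pd j hF) hk
  have limG : ∀ {k : ℕ → EuclideanSpace ℝ (Fin n)} {x}, Tendsto k l (𝓝 x) →
      Tendsto (fun i => grad2 (W i) (k i)) l (𝓝 (grad2 w x)) := by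
    intro k x hk
    exact tendsto_finsetSum _ fun j _ => (lim1 hk j).mul (lim1 hk j)
  -- the maxima converge to the centre
  obtain ⟨z, hz, hlz⟩ := (isCompact_closedBall x₀ r).ultrafilter_le_nhds (l.map y)
    (by
      rw [le_principal_iff]
      exact Eventually.of_forall (f := (l : Filter ℕ)) hyball)
  have hyz : Tendsto y l (𝓝 z) := hlz
  have hΨz : Tendsto (fun i => Ψ i (y i)) l (𝓝 (η z * grad2 w z - pen z)) :=
    (((hη.continuous.tendsto z).comp hyz).mul (limG hyz)).sub
      ((hpen.continuous.tendsto z).comp hyz)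
  have hΨ0 : Tendsto (fun i => Ψ i x₀) l (𝓝 (η x₀ * grad2 w x₀ - pen x₀)) :=
    (tendsto_const_nhds.mul (limG tendsto_const_nhds)).sub tendsto_const_nhds
  have hle := le_of_tendsto_of_tendsto' hΨ0 hΨz fun i => hymax i (by simp [hr.le])
  have hle2 : η z * grad2 w z ≤ η x₀ * grad2 w x₀ := hball hz
  have hpen0 : pen x₀ = 0 := by simp [pen]
  have hpz : pen z ≤ 0 := by linarith
  have hzx : z = x₀ := by
    have : ‖z - x₀‖ ^ 2 = 0 := by
      have h0 : ‖z - x₀‖ ^ 2 * ‖z - x₀‖ ^ 2 ≤ 0 := hpz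
      nlinarith [sq_nonneg (‖z - x₀‖ ^ 2)]
    have h3 : ‖z - x₀‖ = 0 := by simpa using this
    exact sub_eq_zero.1 (norm_eq_zero.1 h3)
  subst hzx
  have hev : ∀ᶠ i in (l : Filter ℕ), lap (Ψ i) (y i) ≤ 0 := by
    have : ∀ᶠ i in (l : Filter ℕ), y i ∈ Metric.ball z r := hyz (Metric.ball_mem_nhds z hr)
    filter_upwards [this] with i hi
    refine lap_nonpos (hΨ i) ?_
    exact (hymax i).isLocalMax (mem_of_superset (Metric.isOpen_ball.mem_nhds hi)
      Metric.ball_subset_closedBall)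
  have hform : ∀ i, lap (Ψ i) (y i) =
      (lap η (y i) * grad2 (W i) (y i)
        + 2 * (∑ k, pd k η (y i) * ∑ j, 2 * (pd j (W i) (y i) * pd k (pd j (W i)) (y i)))
      + η (y i) * (2 * (∑ k, ∑ j, pd k (pd j (W i)) (y i) ^ 2)
      + 2 * ∑ j, pd j (W i) (y i) * pd j (lap (W i)) (y i))) - lap pen (y i) := by
    intro i
    rw [lap_sub (hη.mul (hG2 i)) hpen, lap_mul hη (hG2 i), lap_grad2 (hW3 i)]
    simp only [pd_grad2 ((hW3 i).of_le (by norm_num : (2 : WithTop ℕ∞) ≤ 3))]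
  have hlapc : ∀ {f : EuclideanSpace ℝ (Fin n) → ℝ}, ContDiff ℝ 2 f → Continuous (lap f) := by
    intro f hf
    exact continuous_finsetSum _ fun i _ => cont_pd i (contDiff_pd i hf (by norm_num))
  have hlim : Tendsto (fun i => lap (Ψ i) (y i)) l
      (𝓝 ((lap η z * grad2 w z
        + 2 * (∑ k, pd k η z * ∑ j, 2 * (pd j w z * pd k (pd j w) z))
      + η z * (2 * (∑ k, ∑ j, pd k (pd j w) z ^ 2)
      + 2 * ∑ j, pd j w z * pd j (lap w) z)) - lap pen z)) := by
    simp only [hform]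
    have c1 := ((hlapc hη).tendsto z).comp hyz
    have c2 := ((hlapc hpen).tendsto z).comp hyz
    have c3 := (hη.continuous.tendsto z).comp hyz
    have c4 := fun k => ((cont_pd k hη1).tendsto z).comp hyz
    refine Tendsto.sub (Tendsto.add (Tendsto.add (c1.mul (limG hyz)) ?_) (c3.mul ?_)) c2
    · exact (tendsto_finsetSum _ fun k _ => (c4 k).mul (tendsto_finsetSum _ fun j _ =>
        ((lim1 hyz j).mul (lim2 hyz k j)).const_mul 2)).const_mul 2
    · refine Tendsto.add ?_ ?_
      · exact (tendsto_finsetSum _ fun k _ => tendsto_finsetSum _ fun j _ =>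
          (lim2 hyz k j).pow 2).const_mul 2
      · exact (tendsto_finsetSum _ fun j _ => (lim1 hyz j).mul (lim3 hyz j)).const_mul 2
  have hfin := le_of_tendsto hlim hev
  have hp0 : lap pen z = 0 := lap_pen z
  linarith

theorem matrix_ineq (hn : 2 ≤ n) (H : Fin n → Fin n → ℝ) (g : Fin n → ℝ) (P a : ℝ)
    (hP : 0 < P) (hgP : ∑ i, g i * g i = P) (ha : ∑ k, ∑ j, g k * g j * H k j = a * P) :
    (∑ i, H i i - a) ^ 2 ≤ ((n : ℝ) - 1) * ∑ k, ∑ j, H k j ^ 2 := by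
  have hn' : (0 : ℝ) < (n : ℝ) - 1 := by
    have : (2 : ℝ) ≤ n := by exact_mod_cast hn
    linarith
  set T := ∑ i, H i i with hT
  set s := (T - a) / ((n : ℝ) - 1) with hs
  have key : ∑ k, ∑ j, (H k j - s * (if k = j then 1 else 0) + (s / P) * (g k * g j)) ^ 2
      = (∑ k, ∑ j, H k j ^ 2) + s ^ 2 * n + s ^ 2 - 2 * s * T + 2 * s * a - 2 * s ^ 2 := by
    have e : ∀ k j, (H k j - s * (if k = j then 1 else 0) + (s / P) * (g k * g j)) ^ 2
        = H k j ^ 2 + (if k = j then s ^ 2 - 2 * s * H k j - 2 * s * (s / P) * (g k * g j) else 0)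
          + (s / P) ^ 2 * ((g k * g k) * (g j * g j)) + 2 * (s / P) * (g k * g j * H k j) := by
      intro k j
      split_ifs <;> ring
    simp only [e, Finset.sum_add_distrib, Finset.sum_ite_eq, Finset.mem_univ, if_true,
      Finset.sum_sub_distrib, ← Finset.mul_sum, ← Finset.sum_mul, hgP, ha, ← hT]
    simp
    field_simp
    ring
  have h0 : 0 ≤ ∑ k, ∑ j, (H k j - s * (if k = j then 1 else 0) + (s / P) * (g k * g j)) ^ 2 :=
    Finset.sum_nonneg fun k _ => Finset.sum_nonneg fun j _ => sq_nonneg _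
  rw [key] at h0
  have hsT : T - a = s * ((n : ℝ) - 1) := by
    rw [hs]; field_simp
  have h1 : s ^ 2 * ((n : ℝ) - 1) ≤ ∑ k, ∑ j, H k j ^ 2 := by
    have : s * (T - a) = s ^ 2 * ((n : ℝ) - 1) := by rw [hsT]; ring
    nlinarith
  rw [hsT]
  calc (s * ((n : ℝ) - 1)) ^ 2 = ((n : ℝ) - 1) * (s ^ 2 * ((n : ℝ) - 1)) := by ring
    _ ≤ _ := mul_le_mul_of_nonneg_left h1 hn'.le

/-- The constant of the gradient estimate. -/
noncomputable def CC (n : ℕ) (θ : ℝ) : ℝ :=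
  (4 / θ) * (8 / θ + 16 * ((n : ℝ) - 1) ^ 2 / θ + ((n : ℝ) - 1) * (12 + 2 * n))

set_option maxHeartbeats 1000000 in
theorem scalar_ineq {m N θ k P f y ρ X R HH gF : ℝ} (hm : 0 < m) (hN : 0 ≤ N)
    (hθ : 0 < θ) (hθ1 : θ ≤ 1)
    (hk : k * m ≤ 4 * (1 - θ)) (hP : 0 < P) (hf : 0 ≤ f) (hρ : 0 < ρ) (hX : 0 ≤ X)
    (hρX : ρ + X = R ^ 2)
    (hy : (y * ρ) ^ 2 ≤ P * X)
    (hH : (P + f + 2 * y) ^ 2 ≤ m * HH)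
    (hgF : -(4 * y * P) - k * f * P ≤ gF)
    (hmain : (8 * X - 4 * N * ρ) * P - 32 * P * X + ρ ^ 2 * (2 * HH + 2 * gF) ≤ 0) :
    ρ ^ 2 * P ≤ (4 / θ) * (8 / θ + 16 * m ^ 2 / θ + m * (12 + 2 * N)) * R ^ 2 := by
  set r := R ^ 2 / ρ ^ 2 with hr
  have hρ2 : 0 < ρ ^ 2 := by positivity
  have hRr : R ^ 2 = r * ρ ^ 2 := by rw [hr]; field_simp
  have hXR : X ≤ r * ρ ^ 2 := by linarith
  have hρR : ρ ≤ r * ρ ^ 2 := by linarith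
  have hy2 : y ^ 2 ≤ P * r := by
    have : y ^ 2 * ρ ^ 2 ≤ (P * r) * ρ ^ 2 := by nlinarith
    exact le_of_mul_le_mul_right this hρ2
  have h1 : HH + gF ≤ P * (12 + 2 * N) * r := by
    have : (HH + gF) * ρ ^ 2 ≤ (P * (12 + 2 * N) * r) * ρ ^ 2 := by
      have a1 : P * X ≤ P * (r * ρ ^ 2) := mul_le_mul_of_nonneg_left hXR hP.le
      have a2 : (N * P) * ρ ≤ (N * P) * (r * ρ ^ 2) :=
        mul_le_mul_of_nonneg_left hρR (by positivity)
      nlinarith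
    exact le_of_mul_le_mul_right this hρ2
  have h2 : HH ≤ P * (12 + 2 * N) * r + 4 * y * P + k * f * P := by linarith
  have h3 : (P + f + 2 * y) ^ 2 ≤ m * (P * (12 + 2 * N) * r) + m * (4 * y * P)
      + 4 * (1 - θ) * (f * P) := by
    have b1 := mul_le_mul_of_nonneg_left h2 hm.le
    have b2 : k * m * (f * P) ≤ 4 * (1 - θ) * (f * P) :=
      mul_le_mul_of_nonneg_right hk (by positivity)
    linarith
  -- absorb
  have h4 : (1 - θ / 2) * (P + f) ^ 2 - (2 / θ) * (2 * y) ^ 2 ≤ (P + f + 2 * y) ^ 2 := by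
    have e : (P + f + 2 * y) ^ 2 - ((1 - θ / 2) * (P + f) ^ 2 - (2 / θ) * (2 * y) ^ 2)
        = (θ / 2) * (P + f + (2 / θ) * (2 * y)) ^ 2 + (2 * y) ^ 2 := by
      field_simp
      ring
    have : 0 ≤ (θ / 2) * (P + f + (2 / θ) * (2 * y)) ^ 2 + (2 * y) ^ 2 := by positivity
    linarith
  have h5 : m * (4 * y * P) ≤ (θ / 4) * P ^ 2 + 16 * m ^ 2 / θ * y ^ 2 := by
    have e : (θ / 4) * P ^ 2 + 16 * m ^ 2 / θ * y ^ 2 - m * (4 * y * P)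
        = (θ / 4) * (P - 8 * m / θ * y) ^ 2 := by
      field_simp
      ring
    have : 0 ≤ (θ / 4) * (P - 8 * m / θ * y) ^ 2 := by positivity
    linarith
  have h6 : 4 * (1 - θ) * (f * P) ≤ (1 - θ) * (P + f) ^ 2 := by
    nlinarith [mul_nonneg (sub_nonneg.2 hθ1) (sq_nonneg (P - f))]
  have h7 : P ^ 2 ≤ (P + f) ^ 2 := by nlinarith [mul_nonneg hP.le hf, sq_nonneg f]
  have h8 : (2 / θ) * (2 * y) ^ 2 ≤ 8 / θ * (P * r) := by
    have : (2 / θ) * (2 * y) ^ 2 = 8 / θ * y ^ 2 := by ring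
    rw [this]
    exact mul_le_mul_of_nonneg_left hy2 (by positivity)
  have h9 : 16 * m ^ 2 / θ * y ^ 2 ≤ 16 * m ^ 2 / θ * (P * r) :=
    mul_le_mul_of_nonneg_left hy2 (by positivity)
  have h10 : (θ / 4) * P ^ 2 ≤ (8 / θ + 16 * m ^ 2 / θ + m * (12 + 2 * N)) * (P * r) := by
    have := mul_le_mul_of_nonneg_left h7 (by positivity : 0 ≤ θ / 2)
    linarith
  have h11 : P ≤ (4 / θ) * (8 / θ + 16 * m ^ 2 / θ + m * (12 + 2 * N)) * r := by
    have : P * (θ / 4 * P) ≤ P * ((8 / θ + 16 * m ^ 2 / θ + m * (12 + 2 * N)) * r) := by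
      linarith
    have h := le_of_mul_le_mul_left this hP
    calc P = (4 / θ) * (θ / 4 * P) := by field_simp
      _ ≤ (4 / θ) * ((8 / θ + 16 * m ^ 2 / θ + m * (12 + 2 * N)) * r) :=
        mul_le_mul_of_nonneg_left h (by positivity)
      _ = _ := by ring
  rw [hRr]
  calc ρ ^ 2 * P ≤ ρ ^ 2 * ((4 / θ) * (8 / θ + 16 * m ^ 2 / θ + m * (12 + 2 * N)) * r) :=
        mul_le_mul_of_nonneg_left h11 hρ2.le
    _ = _ := by ring

/-- Cut-off profile. -/
noncomputable def rho (R : ℝ) (x : EuclideanSpace ℝ (Fin n)) : ℝ := R ^ 2 - ‖x - 0‖ ^ 2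

theorem contDiff_rho (R : ℝ) {m : WithTop ℕ∞} :
    ContDiff ℝ m (rho R : EuclideanSpace ℝ (Fin n) → ℝ) :=
  contDiff_const.sub (contDiff_sq 0)

theorem pd_rho (R : ℝ) (k : Fin n) :
    pd k (rho R : EuclideanSpace ℝ (Fin n) → ℝ) = fun x => 0 - 2 * (x k - 0) := by
  unfold rho
  rw [pd_sub k contDiff_const (contDiff_sq 0), pd_const, pd_sq]
  simp

theorem lap_rho (R : ℝ) (x : EuclideanSpace ℝ (Fin n)) : lap (rho R) x = -(2 * n) := by
  rw [lap_eq]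
  have : ∀ k : Fin n, pd k (pd k (rho R)) x = -2 := by
    intro k
    rw [pd_rho, pd_sub k contDiff_const ?_, pd_const, pd_coord]
    · simp
    · have : ContDiff ℝ 1 (fun x : EuclideanSpace ℝ (Fin n) => x k) :=
        (EuclideanSpace.proj k : EuclideanSpace ℝ (Fin n) →L[ℝ] ℝ).contDiff
      fun_prop
  simp [this]
  ring

theorem core {w f : EuclideanSpace ℝ (Fin n) → ℝ} (hn : 2 ≤ n) (hw : ContDiff ℝ 2 w)
    (hf : ContDiff ℝ 1 f) (hlap : ∀ x, lap w x = -grad2 w x - f x) {R k θ : ℝ}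
    {x₀ : EuclideanSpace ℝ (Fin n)} (hρ : 0 < rho R x₀) (hf0 : 0 ≤ f x₀)
    (hP : 0 < grad2 w x₀)
    (hmax : IsLocalMax (fun x => (rho R x * rho R x) * grad2 w x) x₀)
    (hθ : 0 < θ) (hθ1 : θ ≤ 1) (hk : k * ((n : ℝ) - 1) ≤ 4 * (1 - θ))
    (hgf : ∑ j, pd j w x₀ * pd j f x₀ ≤ k * f x₀ * grad2 w x₀) :
    rho R x₀ ^ 2 * grad2 w x₀ ≤ CC n θ * R ^ 2 := by
  have hG1 : ContDiff ℝ 1 (grad2 w) := contDiff_grad2 hw (by norm_num)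
  have hlapf : lap w = fun x => 0 - grad2 w x - f x := by
    funext x; rw [hlap x]; ring
  have hF : ContDiff ℝ 1 (lap w) := by
    rw [hlapf]; exact (contDiff_const.sub hG1).sub hf
  have hη : ContDiff ℝ 2 (fun x : EuclideanSpace ℝ (Fin n) => rho R x * rho R x) :=
    (contDiff_rho R).mul (contDiff_rho R)
  have hη1 : ContDiff ℝ 1 (fun x : EuclideanSpace ℝ (Fin n) => rho R x * rho R x) :=
    (contDiff_rho R).mul (contDiff_rho R)
  have hb := bochner_max hw hF hη hmax
  set ρ := rho R x₀ with hρdef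
  set P := grad2 w x₀ with hPdef
  set X := ∑ j, x₀ j * x₀ j with hXdef
  have hXn : ‖x₀ - 0‖ ^ 2 = X := by
    rw [sub_zero, EuclideanSpace.real_norm_sq_eq, hXdef]
    exact Finset.sum_congr rfl fun j _ => by ring
  have hρX : ρ + X = R ^ 2 := by
    rw [hρdef, ← hXn]; unfold rho; ring
  have hpη : ∀ k, pd k (fun x : EuclideanSpace ℝ (Fin n) => rho R x * rho R x) x₀
      = -4 * ρ * x₀ k := by
    intro k
    rw [pd_mul k (contDiff_rho R) (contDiff_rho R), pd_rho]
    ring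
  have hlη : lap (fun x : EuclideanSpace ℝ (Fin n) => rho R x * rho R x) x₀
      = 8 * X - 4 * n * ρ := by
    rw [lap_mul (contDiff_rho R) (contDiff_rho R), lap_rho]
    simp only [pd_rho]
    have : ∑ k, (0 - 2 * (x₀ k - 0)) * (0 - 2 * (x₀ k - 0)) = 4 * X := by
      rw [hXdef, Finset.mul_sum]
      exact Finset.sum_congr rfl fun j _ => by ring
    rw [this]; ring
  have hpG : ∀ k, pd k (grad2 w) x₀ = ∑ j, 2 * (pd j w x₀ * pd k (pd j w) x₀) := by
    intro k
    rw [pd_grad2 hw k]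
  have hD : ∀ k, (∑ j, 2 * (pd j w x₀ * pd k (pd j w) x₀)) = 4 * x₀ k * P / ρ := by
    intro k
    have h0 := pd_eq_zero k hmax
    rw [pd_mul k hη1 hG1] at h0
    simp only [hpη, hpG] at h0
    have h1 : ρ * (ρ * (∑ j, 2 * (pd j w x₀ * pd k (pd j w) x₀))) = ρ * (4 * x₀ k * P) := by
      linear_combination h0
    have h2 := mul_left_cancel₀ hρ.ne' h1
    rw [eq_div_iff hρ.ne']
    linarith
  set y := (∑ j, pd j w x₀ * x₀ j) / ρ with hydef
  have hyρ : y * ρ = ∑ j, pd j w x₀ * x₀ j := by rw [hydef]; field_simp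
  have hgD : ∑ k, pd k w x₀ * (∑ j, 2 * (pd j w x₀ * pd k (pd j w) x₀)) = 4 * y * P := by
    simp only [hD]
    have : ∑ k, pd k w x₀ * (4 * x₀ k * P / ρ) = (4 * P / ρ) * ∑ k, pd k w x₀ * x₀ k := by
      rw [Finset.mul_sum]
      exact Finset.sum_congr rfl fun j _ => by ring
    rw [this, hydef]; ring
  have hCS : (y * ρ) ^ 2 ≤ P * X := by
    rw [hyρ]
    have := Finset.sum_mul_sq_le_sq_mul_sq Finset.univ (fun j => pd j w x₀) (fun j => x₀ j)
    simpa [hPdef, grad2, hXdef, sq] using this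
  have ha : ∑ k, ∑ j, pd k w x₀ * pd j w x₀ * pd k (pd j w) x₀ = (2 * y) * P := by
    have : ∑ k, pd k w x₀ * (∑ j, 2 * (pd j w x₀ * pd k (pd j w) x₀))
        = 2 * ∑ k, ∑ j, pd k w x₀ * pd j w x₀ * pd k (pd j w) x₀ := by
      simp only [Finset.mul_sum]
      exact Finset.sum_congr rfl fun k _ => Finset.sum_congr rfl fun j _ => by ring
    linarith
  have hM := matrix_ineq hn (fun k j => pd k (pd j w) x₀) (fun j => pd j w x₀) P (2 * y) hP rfl ha
  have hM' : (P + f x₀ + 2 * y) ^ 2 ≤ ((n : ℝ) - 1) * ∑ k, ∑ j, pd k (pd j w) x₀ ^ 2 := by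
    have e : ∑ i, pd i (pd i w) x₀ = -P - f x₀ := by rw [← lap_eq, hlap]
    simp only [e] at hM
    calc _ = (-P - f x₀ - 2 * y) ^ 2 := by ring
      _ ≤ _ := hM
  have hgF : ∑ j, pd j w x₀ * pd j (lap w) x₀ = -(4 * y * P) - ∑ j, pd j w x₀ * pd j f x₀ := by
    have : ∀ j, pd j (lap w) x₀ = -(∑ i, 2 * (pd i w x₀ * pd j (pd i w) x₀)) - pd j f x₀ := by
      intro j
      rw [hlapf, pd_sub j (contDiff_const.sub hG1) hf, pd_sub j contDiff_const hG1, pd_const,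
        ← hpG]
      ring
    rw [← hgD]
    simp only [this, mul_sub, Finset.sum_sub_distrib, mul_neg, Finset.sum_neg_distrib]
  have hn' : (0 : ℝ) < (n : ℝ) - 1 := by
    have : (2 : ℝ) ≤ n := by exact_mod_cast hn
    linarith
  have hX0 : 0 ≤ X := Finset.sum_nonneg fun j _ => mul_self_nonneg _
  unfold CC
  refine scalar_ineq (k := k) (f := f x₀) (y := y) (X := X)
    (HH := ∑ k, ∑ j, pd k (pd j w) x₀ ^ 2)
    (gF := ∑ j, pd j w x₀ * pd j (lap w) x₀) hn' (Nat.cast_nonneg n) hθ hθ1 hk hP hf0 hρ hX0 hρX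
    hCS hM' (by rw [hgF]; linarith) ?_
  have hsum : ∑ k, pd k (fun x : EuclideanSpace ℝ (Fin n) => rho R x * rho R x) x₀
      * ∑ j, 2 * (pd j w x₀ * pd k (pd j w) x₀) = -16 * P * X := by
    simp only [hpη, hD]
    rw [hXdef, Finset.mul_sum]
    refine Finset.sum_congr rfl fun j _ => ?_
    field_simp
    ring
  rw [hsum, hlη] at hb
  linarith

theorem lap_log {u : EuclideanSpace ℝ (Fin n) → ℝ} (hu : ContDiff ℝ 2 u) (hpos : ∀ x, 0 < u x)
    (x : EuclideanSpace ℝ (Fin n)) :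
    lap (fun x => Real.log (u x)) x = -grad2 (fun x => Real.log (u x)) x + lap u x / u x := by
  have hu1 : ContDiff ℝ 1 u := hu.of_le (by norm_num)
  have hinv : ContDiff ℝ 1 (fun x => (u x)⁻¹) := hu1.inv fun x => (hpos x).ne'
  have h1 : ∀ j, pd j (fun x => Real.log (u x)) = fun x => (u x)⁻¹ * pd j u x := by
    intro j
    funext y
    exact pd_comp (φ := Real.log) j y hu1 (Real.hasDerivAt_log (hpos y).ne')
  have h2 : ∀ j, pd j (fun x => (u x)⁻¹) x = -(u x ^ 2)⁻¹ * pd j u x := by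
    intro j
    exact pd_comp (φ := fun t => t⁻¹) j x hu1 (hasDerivAt_inv (hpos x).ne')
  unfold grad2
  rw [lap_eq, lap_eq, Finset.sum_div, ← Finset.sum_neg_distrib, ← Finset.sum_add_distrib]
  refine Finset.sum_congr rfl fun j _ => ?_
  rw [h1, pd_mul j hinv (contDiff_pd j hu (by norm_num))]
  simp only [h2]
  have := (hpos x).ne'
  field_simp

theorem pd_exp_comb {w z : EuclideanSpace ℝ (Fin n) → ℝ} (hw : ContDiff ℝ 1 w)
    (hz : ContDiff ℝ 1 z) (p : ℝ) (j : Fin n) (x : EuclideanSpace ℝ (Fin n)) :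
    pd j (fun x => Real.exp (p * z x - w x)) x
      = Real.exp (p * z x - w x) * (p * pd j z x - pd j w x) := by
  have hc : ContDiff ℝ 1 (fun x => p * z x - w x) := (contDiff_const.mul hz).sub hw
  rw [pd_comp (φ := Real.exp) j x hc (Real.hasDerivAt_exp _),
    pd_sub j (contDiff_const.mul hz) hw, pd_mul j contDiff_const hz, pd_const]
  ring

theorem cross_bound {w z : EuclideanSpace ℝ (Fin n) → ℝ} (hw : ContDiff ℝ 1 w)
    (hz : ContDiff ℝ 1 z) {p L s : ℝ} (hp : 0 ≤ p) (hL : 0 < L) (hs : p = s * L)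
    (x : EuclideanSpace ℝ (Fin n)) (h : L ^ 2 * grad2 z x ≤ grad2 w x) :
    ∑ j, pd j w x * pd j (fun x => Real.exp (p * z x - w x)) x
      ≤ (s - 1) * Real.exp (p * z x - w x) * grad2 w x := by
  have e : ∑ j, pd j w x * pd j (fun x => Real.exp (p * z x - w x)) x
      = Real.exp (p * z x - w x) * (p * (∑ j, pd j w x * pd j z x) - grad2 w x) := by
    unfold grad2
    rw [Finset.mul_sum, ← Finset.sum_sub_distrib, Finset.mul_sum]
    refine Finset.sum_congr rfl fun j _ => ?_
    rw [pd_exp_comb hw hz]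
    ring
  have hsq : 0 ≤ ∑ j, (pd j w x - L * pd j z x) ^ 2 := Finset.sum_nonneg fun j _ => sq_nonneg _
  have hexp : ∑ j, (pd j w x - L * pd j z x) ^ 2
      = grad2 w x - 2 * L * (∑ j, pd j w x * pd j z x) + L ^ 2 * grad2 z x := by
    unfold grad2
    rw [Finset.mul_sum, Finset.mul_sum, ← Finset.sum_sub_distrib, ← Finset.sum_add_distrib]
    exact Finset.sum_congr rfl fun j _ => by ring
  have h1 : L * (∑ j, pd j w x * pd j z x) ≤ grad2 w x := by linarith
  have hs0 : 0 ≤ s := by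
    by_contra hneg
    push Not at hneg
    nlinarith
  have h2 : p * (∑ j, pd j w x * pd j z x) ≤ s * grad2 w x := by
    rw [hs, mul_assoc]
    exact mul_le_mul_of_nonneg_left h1 hs0
  rw [e]
  have := mul_le_mul_of_nonneg_left h2 (Real.exp_pos (p * z x - w x)).le
  linarith

theorem grad2_nonneg (w : EuclideanSpace ℝ (Fin n) → ℝ) (x : EuclideanSpace ℝ (Fin n)) :
    0 ≤ grad2 w x := Finset.sum_nonneg fun _ _ => mul_self_nonneg _

theorem grad_bound {w z : EuclideanSpace ℝ (Fin n) → ℝ} (hn : 2 ≤ n) (hw : ContDiff ℝ 2 w)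
    (hz : ContDiff ℝ 2 z) {p q L s θ : ℝ} (hp : 0 ≤ p) (hq : 0 ≤ q) (hL : 0 < L)
    (hsp : p = s * L) (hsq : q * L = s)
    (hlw : ∀ x, lap w x = -grad2 w x - Real.exp (p * z x - w x))
    (hlz : ∀ x, lap z x = -grad2 z x - Real.exp (q * w x - z x))
    (hθ : 0 < θ) (hθ1 : θ ≤ 1) (hk : (s - 1) * ((n : ℝ) - 1) ≤ 4 * (1 - θ))
    {R : ℝ} {x : EuclideanSpace ℝ (Fin n)} (hx : 0 < rho R x) :
    rho R x ^ 2 * grad2 w x ≤ (1 + L ^ 2) * CC n θ * R ^ 2 := by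
  have hw1 : ContDiff ℝ 1 w := hw.of_le (by norm_num)
  have hz1 : ContDiff ℝ 1 z := hz.of_le (by norm_num)
  have hfw : ContDiff ℝ 1 (fun x => Real.exp (p * z x - w x)) :=
    ((contDiff_const.mul hz1).sub hw1).exp
  have hfz : ContDiff ℝ 1 (fun x => Real.exp (q * w x - z x)) :=
    ((contDiff_const.mul hw1).sub hz1).exp
  have hn' : (0 : ℝ) < (n : ℝ) - 1 := by
    have : (2 : ℝ) ≤ n := by exact_mod_cast hn
    linarith
  have hCC : 0 ≤ CC n θ := by unfold CC; positivity
  have hcw : Continuous (grad2 w) := (contDiff_grad2 (m := 1) hw (by norm_num)).continuous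
  have hcz : Continuous (grad2 z) := (contDiff_grad2 (m := 1) hz (by norm_num)).continuous
  have hcρ : Continuous (rho R : EuclideanSpace ℝ (Fin n) → ℝ) :=
    (contDiff_rho (m := 1) R).continuous
  let G : EuclideanSpace ℝ (Fin n) → ℝ := fun x => rho R x ^ 2 * max (grad2 w x) (L ^ 2 * grad2 z x)
  have hG : Continuous G := by
    exact (hcρ.pow 2).mul (hcw.max (continuous_const.mul hcz))
  have hK : IsCompact {y : EuclideanSpace ℝ (Fin n) | 0 ≤ rho R y} := by
    refine (isCompact_closedBall (0 : EuclideanSpace ℝ (Fin n)) |R|).of_isClosed_subset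
      (isClosed_le continuous_const hcρ) ?_
    intro y hy
    have hy' : 0 ≤ R ^ 2 - ‖y - 0‖ ^ 2 := hy
    rw [mem_closedBall_zero_iff]
    rw [sub_zero] at hy'
    exact abs_le_of_sq_le_sq' (by rw [sq_abs]; linarith) (abs_nonneg R) |>.2
  obtain ⟨x₀, hx₀, hmax⟩ := hK.exists_isMaxOn ⟨x, hx.le⟩ hG.continuousOn
  have hbound : G x₀ ≤ (1 + L ^ 2) * CC n θ * R ^ 2 := by
    by_cases hpos : G x₀ ≤ 0
    · exact hpos.trans (by positivity)
    push Not at hpos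
    have hρ0 : 0 < rho R x₀ := by
      rcases lt_or_eq_of_le (show 0 ≤ rho R x₀ from hx₀) with h | h
      · exact h
      · exfalso
        simp [G, ← h] at hpos
    have hmaxpos : 0 < max (grad2 w x₀) (L ^ 2 * grad2 z x₀) := by
      by_contra hcon
      push Not at hcon
      have : G x₀ ≤ 0 := mul_nonpos_of_nonneg_of_nonpos (sq_nonneg _) hcon
      linarith
    have hnear : ∀ᶠ y in 𝓝 x₀, G y ≤ G x₀ := by
      have : ∀ᶠ y in 𝓝 x₀, 0 < rho R y := (isOpen_lt continuous_const hcρ).mem_nhds hρ0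
      filter_upwards [this] with y hy
      exact hmax hy.le
    rcases le_total (L ^ 2 * grad2 z x₀) (grad2 w x₀) with hcase | hcase
    · rw [max_eq_left hcase] at hmaxpos
      have hGx : G x₀ = rho R x₀ ^ 2 * grad2 w x₀ := by simp only [G]; rw [max_eq_left hcase]
      have hloc : IsLocalMax (fun x => (rho R x * rho R x) * grad2 w x) x₀ := by
        filter_upwards [hnear] with y hy
        have h1 : rho R y ^ 2 * grad2 w y ≤ G y :=
          mul_le_mul_of_nonneg_left (le_max_left _ _) (sq_nonneg _)
        rw [hGx] at hy
        calc (rho R y * rho R y) * grad2 w y = rho R y ^ 2 * grad2 w y := by ring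
          _ ≤ rho R x₀ ^ 2 * grad2 w x₀ := h1.trans hy
          _ = _ := by ring
      have := core hn hw hfw hlw hρ0 (Real.exp_pos _).le hmaxpos hloc hθ hθ1 hk
        (cross_bound hw1 hz1 hp hL hsp x₀ hcase)
      rw [hGx]
      have h0 : 0 ≤ L ^ 2 * CC n θ * R ^ 2 := by positivity
      linarith
    · rw [max_eq_right hcase] at hmaxpos
      have hL2 : 0 < L ^ 2 := by positivity
      have hzpos : 0 < grad2 z x₀ := by
        by_contra hcon
        push Not at hcon
        have := mul_nonpos_of_nonneg_of_nonpos hL2.le hcon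
        linarith
      have hGx : G x₀ = rho R x₀ ^ 2 * (L ^ 2 * grad2 z x₀) := by
        simp only [G]; rw [max_eq_right hcase]
      have hloc : IsLocalMax (fun x => (rho R x * rho R x) * grad2 z x) x₀ := by
        filter_upwards [hnear] with y hy
        have h1 : rho R y ^ 2 * (L ^ 2 * grad2 z y) ≤ G y :=
          mul_le_mul_of_nonneg_left (le_max_right _ _) (sq_nonneg _)
        rw [hGx] at hy
        have h2 : L ^ 2 * ((rho R y * rho R y) * grad2 z y)
            ≤ L ^ 2 * ((rho R x₀ * rho R x₀) * grad2 z x₀) := by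
          linarith [h1.trans hy]
        exact le_of_mul_le_mul_left h2 hL2
      have hLi : 0 < L⁻¹ := inv_pos.2 hL
      have hcase' : L⁻¹ ^ 2 * grad2 w x₀ ≤ grad2 z x₀ := by
        rw [inv_pow, inv_mul_le_iff₀ hL2]
        exact hcase
      have hqs : q = s * L⁻¹ := by
        rw [← hsq]; field_simp
      have := core hn hz hfz hlz hρ0 (Real.exp_pos _).le hzpos hloc hθ hθ1 hk
        (cross_bound hz1 hw1 hq hLi hqs x₀ hcase')
      rw [hGx]
      have h3 := mul_le_mul_of_nonneg_left this hL2.le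
      have h0 : 0 ≤ CC n θ * R ^ 2 := by positivity
      linarith
  calc rho R x ^ 2 * grad2 w x ≤ G x :=
        mul_le_mul_of_nonneg_left (le_max_left _ _) (sq_nonneg _)
    _ ≤ G x₀ := hmax hx.le
    _ ≤ _ := hbound

theorem no_solution {w z : EuclideanSpace ℝ (Fin n) → ℝ} (hn : 2 ≤ n) (hw : ContDiff ℝ 2 w)
    (hz : ContDiff ℝ 2 z) {p q : ℝ} (hp : 1 ≤ p) (hq : 1 ≤ q)
    (hlw : ∀ x, lap w x = -grad2 w x - Real.exp (p * z x - w x))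
    (hlz : ∀ x, lap z x = -grad2 z x - Real.exp (q * w x - z x))
    (hpq : p * q * ((n : ℝ) - 1) ^ 2 < ((n : ℝ) + 3) ^ 2) : False := by
  have hn' : (0 : ℝ) < (n : ℝ) - 1 := by
    have : (2 : ℝ) ≤ n := by exact_mod_cast hn
    linarith
  set s := Real.sqrt (p * q) with hs
  have hs2 : s ^ 2 = p * q := Real.sq_sqrt (by positivity)
  have hs1 : 1 ≤ s := by
    rw [hs, Real.one_le_sqrt]
    nlinarith
  have hs0 : 0 < s := by linarith
  have hsn : s * ((n : ℝ) - 1) < (n : ℝ) + 3 := by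
    refine lt_of_pow_lt_pow_left₀ 2 (by positivity) ?_
    rw [mul_pow, hs2]
    exact hpq
  set θ := 1 - (s - 1) * ((n : ℝ) - 1) / 4 with hθdef
  have hθ : 0 < θ := by rw [hθdef]; linarith
  have hθ1 : θ ≤ 1 := by
    have : 0 ≤ (s - 1) * ((n : ℝ) - 1) := mul_nonneg (by linarith) hn'.le
    rw [hθdef]; linarith
  have hL : 0 < p / s := by positivity
  have hgz : ∀ x, grad2 w x = 0 := by
    intro x
    by_contra hne
    have hP : 0 < grad2 w x := lt_of_le_of_ne (grad2_nonneg w x) (Ne.symm hne)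
    set K := (1 + (p / s) ^ 2) * CC n θ with hK
    have hK0 : 0 ≤ K := by
      have : 0 ≤ CC n θ := by unfold CC; positivity
      positivity
    set c := ‖x - 0‖ ^ 2 with hc
    have hc0 : 0 ≤ c := by positivity
    set T := 2 * c + 1 + 4 * K / grad2 w x with hT
    have hKP : 0 ≤ 4 * K / grad2 w x := by positivity
    have hT0 : 0 < T := by positivity
    have hR : Real.sqrt T ^ 2 = T := Real.sq_sqrt hT0.le
    have hrho : rho (Real.sqrt T) x = T - c := by unfold rho; rw [hR]
    have hb := grad_bound hn hw hz (p := p) (q := q) (L := p / s) (s := s) (θ := θ) (by linarith)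
      (by linarith) hL (by field_simp) (by field_simp; rw [hs2]; ring) hlw hlz hθ hθ1
      (by rw [hθdef]; linarith) (R := Real.sqrt T) (x := x) (by rw [hrho]; linarith)
    rw [hrho, hR, ← hK] at hb
    have h1 : (T / 2) ^ 2 ≤ (T - c) ^ 2 := by
      apply pow_le_pow_left₀ (by positivity)
      linarith
    have h2 : (T / 2) ^ 2 * grad2 w x ≤ K * T :=
      (mul_le_mul_of_nonneg_right h1 hP.le).trans hb
    have h3 : T * (T * grad2 w x) ≤ T * (4 * K) := by linarith
    have h4 := le_of_mul_le_mul_left h3 hT0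
    have h5 : T * grad2 w x = (2 * c + 1) * grad2 w x + 4 * K := by
      rw [hT]; field_simp
    have h6 : 0 < (2 * c + 1) * grad2 w x := by positivity
    linarith
  have hpd : ∀ j, pd j w = fun _ => 0 := by
    intro j
    funext x
    have := (Finset.sum_eq_zero_iff_of_nonneg (fun j _ => mul_self_nonneg (pd j w x))).1 (hgz x) j
      (Finset.mem_univ j)
    exact mul_self_eq_zero.1 this
  have h0 := hlw 0
  rw [hgz, lap_eq] at h0
  simp only [hpd, pd_const, Finset.sum_const_zero] at h0
  have := Real.exp_pos (p * z 0 - w 0)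
  linarith

theorem arith {c₀ : ℝ} (hc : 2 < c₀) {x p q : ℝ} (hx : 2 ≤ x) (hx2 : 6 ≤ (c₀ - 2) * x)
    (hxc : c₀ < x) (hp : 1 ≤ p) (hq : 1 ≤ q)
    (h : 1 - 2 / x + c₀ / x ^ 2 ≤ 1 / (p + 1) + 1 / (q + 1)) :
    p * q * (x - 1) ^ 2 < (x + 3) ^ 2 := by
  have hx0 : 0 < x := by linarith
  have h1 : (p * q - 1) * x ^ 2 ≤ (2 * x - c₀) * ((p + 1) * (q + 1)) := by
    have e1 : 1 - 2 / x + c₀ / x ^ 2 = (x ^ 2 - 2 * x + c₀) / x ^ 2 := by field_simp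
    have e2 : 1 / (p + 1) + 1 / (q + 1) = (p + q + 2) / ((p + 1) * (q + 1)) := by
      field_simp; ring
    rw [e1, e2, div_le_div_iff₀ (by positivity) (by positivity)] at h
    nlinarith
  have h2 : (p + 1) * (q + 1) ≤ 2 * (p * q + 1) := by nlinarith
  have h3 : (p * q - 1) * x ^ 2 ≤ (2 * x - c₀) * (2 * (p * q + 1)) :=
    h1.trans (mul_le_mul_of_nonneg_left h2 (by linarith))
  set X := p * q with hX
  have hX1 : 1 ≤ X := by nlinarith
  -- X * (x^2 - 4x + 2c) ≤ x^2 + 4x - 2c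
  have h4 : X * (x ^ 2 - 4 * x + 2 * c₀) ≤ x ^ 2 + 4 * x - 2 * c₀ := by linarith
  have h5 : 0 < x ^ 2 - 4 * x + 2 * c₀ := by nlinarith [sq_nonneg (x - 2)]
  have h6 : (x ^ 2 + 4 * x - 2 * c₀) * (x - 1) ^ 2 < (x + 3) ^ 2 * (x ^ 2 - 4 * x + 2 * c₀) := by
    have h7 : 0 < (c₀ - 2) * x ^ 2 + (2 * c₀ - 10) * x + 5 * c₀ := by nlinarith
    nlinarith
  have h8 : (X * (x - 1) ^ 2) * (x ^ 2 - 4 * x + 2 * c₀)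
      < (x + 3) ^ 2 * (x ^ 2 - 4 * x + 2 * c₀) := by
    have := mul_le_mul_of_nonneg_right h4 (sq_nonneg (x - 1))
    linarith
  exact lt_of_mul_lt_mul_right h8 h5.le

end LaneEmdenAux

theorem laneEmden_conjecture_large_dimension (c₀ : ℝ) (hc₀ : 2 < c₀) :
    ∃ N : ℕ, ∀ n : ℕ, N ≤ n → ∀ p q : ℝ, 1 ≤ p → 1 ≤ q →
      1 - 2 / (n : ℝ) + c₀ / (n : ℝ) ^ 2 ≤ 1 / (p + 1) + 1 / (q + 1) →
      ¬ ∃ u v : EuclideanSpace ℝ (Fin n) → ℝ,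
          ContDiff ℝ 2 u ∧ ContDiff ℝ 2 v ∧
          (∀ x, 0 < u x) ∧ (∀ x, 0 < v x) ∧
          (∀ x, -lap u x = v x ^ p) ∧ (∀ x, -lap v x = u x ^ q) := by
  obtain ⟨N, hN⟩ := exists_nat_gt (max (6 / (c₀ - 2)) c₀)
  refine ⟨N, fun n hn p q hp hq h => ?_⟩
  rintro ⟨u, v, hu, hv, hu0, hv0, hlu, hlv⟩
  have hNn : (N : ℝ) ≤ n := by exact_mod_cast hn
  have hn1 : 6 / (c₀ - 2) < n := (le_max_left _ _).trans_lt (hN.trans_le hNn)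
  have hn2 : c₀ < n := (le_max_right _ _).trans_lt (hN.trans_le hNn)
  have hn3 : (2 : ℝ) ≤ n := by linarith
  have hn4 : 2 ≤ n := by exact_mod_cast hn3
  have hn5 : 6 ≤ (c₀ - 2) * n := by
    rw [div_lt_iff₀ (by linarith)] at hn1
    linarith
  have key : ∀ (a b : EuclideanSpace ℝ (Fin n) → ℝ) (r : ℝ), ContDiff ℝ 2 a → (∀ x, 0 < a x) →
      (∀ x, 0 < b x) → (∀ x, -lap a x = b x ^ r) →
      ∀ x, lap (fun x => Real.log (a x)) x = -LaneEmdenAux.grad2 (fun x => Real.log (a x)) x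
        - Real.exp (r * Real.log (b x) - Real.log (a x)) := by
    intro a b r ha ha0 hb0 hl x
    rw [LaneEmdenAux.lap_log ha ha0, Real.exp_sub, Real.exp_log (ha0 x), mul_comm r,
      ← Real.rpow_def_of_pos (hb0 x), ← hl x]
    ring
  exact LaneEmdenAux.no_solution hn4 (hu.log fun x => (hu0 x).ne') (hv.log fun x => (hv0 x).ne')
    hp hq (key u v p hu hu0 hv0 hlu) (key v u q hv hv0 hu0 hlv)
    (LaneEmdenAux.arith hc₀ hn3 hn5 hn2 hp hq h)
end

section
/- Let Ω ⊆ ℝ^n be open, let u ∈ C²(Ω) be positive, let r, k ∈ ℝ with k ≠ −1, and let φ ∈ C_c²(Ω) be nonnegative. Then λ₁ ∫_Ω u^{r−2}|∇u|⁴ φ + λ₂ ∫_Ω u^{r−1}|∇u|²(−Δu) φ − ((n−1)/n) ∫_Ω u^r (−Δu)² φ ≤ I₁, where λ₁ = −((n−1)/n)k² + k(r−1) − r(r−1)/2, λ₂ = (3/2)r − ((n+2)/n)k, and I₁ = (1/2)∫_Ω u^r |∇u|² Δφ + ∫_Ω u^r Δu (∇u·∇φ) + (r−k)∫_Ω u^{r−1}|∇u|²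 (∇u·∇φ). -/
open MeasureTheory Real
open scoped InnerProductSpace

/-- Partial derivative in the `i`-th coordinate direction. -/
noncomputable def pd {n : ℕ} (i : Fin n) (f : EuclideanSpace ℝ (Fin n) → ℝ)
    (x : EuclideanSpace ℝ (Fin n)) : ℝ :=
  fderiv ℝ f x (EuclideanSpace.single i 1)

section helpers
variable {n : ℕ}

lemma lap_eq_s3 (f : EuclideanSpace ℝ (Fin n) → ℝ) (x : EuclideanSpace ℝ (Fin n)) :
    lap f x = ∑ i, pd i (pd i f) x := rfl

lemma gradient_apply_pd (f : EuclideanSpace ℝ (Fin n) → ℝ) (x : EuclideanSpace ℝ (Fin n))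
    (i : Fin n) : (gradient f x) i = pd i f x := by
  have h := inner_gradient_left (𝕜 := ℝ) (f := f) (x := x) (y := EuclideanSpace.single i (1 : ℝ))
  rw [EuclideanSpace.inner_single_right] at h
  simpa [pd] using h

lemma norm_gradient_sq (f : EuclideanSpace ℝ (Fin n) → ℝ) (x : EuclideanSpace ℝ (Fin n)) :
    ‖gradient f x‖ ^ 2 = ∑ i, pd i f x ^ 2 := by
  rw [EuclideanSpace.norm_sq_eq]
  simp [gradient_apply_pd]

lemma inner_gradient_pd (f g : EuclideanSpace ℝ (Fin n) → ℝ) (x : EuclideanSpace ℝ (Fin n)) :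
    ⟪gradient f x, gradient g x⟫_ℝ = ∑ i, pd i f x * pd i g x := by
  rw [PiLp.inner_apply]
  simp [gradient_apply_pd, mul_comm]

lemma contDiff_pd {f : EuclideanSpace ℝ (Fin n) → ℝ} (hf : ContDiff ℝ 2 f) (i : Fin n) :
    ContDiff ℝ 1 (pd i f) := by
  have h : ContDiff ℝ 1 (fderiv ℝ f) := hf.fderiv_right (by norm_num)
  exact h.clm_apply contDiff_const

lemma continuous_pd {f : EuclideanSpace ℝ (Fin n) → ℝ} (hf : ContDiff ℝ 1 f) (i : Fin n) :
    Continuous (pd i f) :=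
  (hf.continuous_fderiv (by norm_num)).clm_apply continuous_const

lemma hcs_pd {f : EuclideanSpace ℝ (Fin n) → ℝ} (hf : HasCompactSupport f) (i : Fin n) :
    HasCompactSupport (pd i f) := hf.fderiv_apply ℝ _

lemma pd_mul {f g : EuclideanSpace ℝ (Fin n) → ℝ} (hf : ContDiff ℝ 1 f) (hg : ContDiff ℝ 1 g)
    (i : Fin n) (x : EuclideanSpace ℝ (Fin n)) :
    pd i (fun y => f y * g y) x = pd i f x * g x + f x * pd i g x := by
  have h := ((hf.differentiable (by norm_num) x).hasFDerivAt.mul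
    (hg.differentiable (by norm_num) x).hasFDerivAt).fderiv
  have e : pd i (fun y => f y * g y) x = fderiv ℝ (f * g) x (EuclideanSpace.single i 1) := rfl
  rw [e, h]
  simp [pd]
  ring

lemma pd_rpow {u : EuclideanSpace ℝ (Fin n) → ℝ} (hu : ContDiff ℝ 1 u) (h0 : ∀ x, 0 < u x)
    (p : ℝ) (i : Fin n) (x : EuclideanSpace ℝ (Fin n)) :
    pd i (fun y => u y ^ p) x = p * u x ^ (p - 1) * pd i u x := by
  have h := ((hu.differentiable (by norm_num) x).hasFDerivAt.rpow_const (p := p)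
    (Or.inl (h0 x).ne')).fderiv
  rw [pd, h]
  simp [pd]

lemma pd_sumsq {u : EuclideanSpace ℝ (Fin n) → ℝ} (hu : ContDiff ℝ 2 u)
    (i : Fin n) (x : EuclideanSpace ℝ (Fin n)) :
    pd i (fun y => ∑ j, pd j u y ^ 2) x = ∑ j, 2 * (pd j u x * pd i (pd j u) x) := by
  have h : HasFDerivAt (fun y => ∑ j, pd j u y ^ 2)
      (∑ j, ((2 : ℕ) • pd j u x ^ (2 - 1)) • fderiv ℝ (pd j u) x) x :=
    HasFDerivAt.fun_sum fun j _ =>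
      ((contDiff_pd hu j).differentiable (by norm_num) x).hasFDerivAt.pow 2
  rw [pd, h.fderiv]
  simp [pd, mul_assoc]

lemma pd_symm {u : EuclideanSpace ℝ (Fin n) → ℝ} (hu : ContDiff ℝ 2 u)
    (i j : Fin n) (x : EuclideanSpace ℝ (Fin n)) :
    pd i (pd j u) x = pd j (pd i u) x := by
  have h1 : ContDiff ℝ 1 (fderiv ℝ u) := hu.fderiv_right (by norm_num)
  have h2 : ∀ a b : Fin n, pd a (pd b u) x =
      fderiv ℝ (fderiv ℝ u) x (EuclideanSpace.single a 1) (EuclideanSpace.single b 1) := by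
    intro a b
    have h := ((h1.differentiable (by norm_num) x).hasFDerivAt.clm_apply
      (hasFDerivAt_const (EuclideanSpace.single b (1:ℝ)) x)).fderiv
    have e : pd a (pd b u) x = fderiv ℝ (fun y => fderiv ℝ u y (EuclideanSpace.single b 1)) x
      (EuclideanSpace.single a 1) := rfl
    rw [e, h]
    simp
  rw [h2, h2]
  exact hu.contDiffAt.isSymmSndFDerivAt (by simp) _ _

/-- The integral of a derivative of a compactly supported `C¹` function vanishes. -/
lemma integral_pd_eq_zero {f : EuclideanSpace ℝ (Fin n) → ℝ} (hf : ContDiff ℝ 1 f)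
    (hc : HasCompactSupport f) (i : Fin n) : ∫ x, pd i f x = 0 := by
  have hi : Integrable (pd i f) := (continuous_pd hf i).integrable_of_hasCompactSupport (hcs_pd hc i)
  have hif : Integrable f := hf.continuous.integrable_of_hasCompactSupport hc
  have h := integral_mul_fderiv_eq_neg_fderiv_mul_of_integrable (μ := volume) (𝕜 := ℝ)
    (f := fun _ : EuclideanSpace ℝ (Fin n) => (1 : ℝ)) (g := f) (v := EuclideanSpace.single i 1)
    (by simp) (by simp only [one_mul]; exact hi) (by simpa using hif)
    (fun x _ => differentiableAt_const _)
    (fun x _ => hf.differentiable (by norm_num) x)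
  simpa [pd] using h

/-- Derivative of a correlation integral at `0`. -/
lemma hasDerivAt_corr {f g : EuclideanSpace ℝ (Fin n) → ℝ} (hf : Continuous f)
    (hg : ContDiff ℝ 1 g) (i : Fin n) (K : Set (EuclideanSpace ℝ (Fin n))) (hK : IsCompact K)
    (h0 : ∀ t ∈ Metric.ball (0 : ℝ) 1, ∀ x, x ∉ K →
      f x * pd i g (x + t • EuclideanSpace.single i 1) = 0)
    (hfgi : Integrable (fun x => f x * g x)) :
    HasDerivAt (fun t : ℝ => ∫ x, f x * g (x + t • EuclideanSpace.single i 1))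
      (∫ x, f x * pd i g x) 0 := by
  have hpg := continuous_pd hg i
  have hcont : Continuous (fun p : EuclideanSpace ℝ (Fin n) × ℝ =>
      f p.1 * pd i g (p.1 + p.2 • EuclideanSpace.single i 1)) := by fun_prop
  obtain ⟨C, hC⟩ := (hK.prod (isCompact_closedBall (0 : ℝ) 1)).exists_bound_of_continuousOn
    hcont.continuousOn
  have key := hasDerivAt_integral_of_dominated_loc_of_deriv_le (μ := volume) (𝕜 := ℝ)
    (F := fun t x => f x * g (x + t • EuclideanSpace.single i 1))
    (F' := fun t x => f x * pd i g (x + t • EuclideanSpace.single i 1))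
    (x₀ := (0 : ℝ)) (s := Metric.ball (0 : ℝ) 1) (bound := K.indicator (fun _ => C))
    (Metric.ball_mem_nhds _ one_pos)
    (Filter.Eventually.of_forall fun t => by
      have := hg.continuous
      exact Continuous.aestronglyMeasurable (by fun_prop))
    (by simpa using hfgi)
    (Continuous.aestronglyMeasurable (by fun_prop))
    (Filter.Eventually.of_forall fun x t ht => by
      by_cases hx : x ∈ K
      · rw [Set.indicator_of_mem hx]
        exact hC (x, t) ⟨hx, Metric.ball_subset_closedBall ht⟩
      · rw [Set.indicator_of_notMem hx, h0 t ht x hx, norm_zero])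
    ((integrable_indicator_iff hK.measurableSet).2 (integrableOn_const hK.measure_lt_top.ne))
    (Filter.Eventually.of_forall fun x t ht => by
      have hl : HasDerivAt (fun s : ℝ => x + s • EuclideanSpace.single i (1 : ℝ))
          (EuclideanSpace.single i (1 : ℝ)) t := by
        simpa using ((hasDerivAt_id t).smul_const (EuclideanSpace.single i (1 : ℝ))).const_add x
      have hgx := (hg.differentiable (by norm_num)
        (x + t • EuclideanSpace.single i (1 : ℝ))).hasFDerivAt
      exact (hgx.comp_hasDerivAt t hl).const_mul (f x))
  simpa using key.2

/-- Weak commutation of partial derivatives for `C¹` functions. -/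
lemma cross {b c : EuclideanSpace ℝ (Fin n) → ℝ} (hb : ContDiff ℝ 1 b) (hc : ContDiff ℝ 1 c)
    (hcs : HasCompactSupport c) (i j : Fin n) :
    ∫ x, pd i c x * pd j b x = ∫ x, pd j c x * pd i b x := by
  set e : EuclideanSpace ℝ (Fin n) := EuclideanSpace.single j 1 with he
  have hci := continuous_pd hc i
  have hcj := continuous_pd hc j
  have hbi := continuous_pd hb i
  -- first representation
  have h1 : HasDerivAt (fun t : ℝ => ∫ x, pd i c x * b (x + t • e))
      (∫ x, pd i c x * pd j b x) 0 := by
    refine hasDerivAt_corr hci hb j (tsupport (pd i c)) (hcs_pd hcs i) ?_ ?_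
    · intro t _ x hx
      rw [image_eq_zero_of_notMem_tsupport hx, zero_mul]
    · exact (hci.mul hb.continuous).integrable_of_hasCompactSupport (hcs_pd hcs i).mul_right
  -- second representation
  have h2 : HasDerivAt (fun t : ℝ => ∫ x, pd i b x * c (x + t • e))
      (∫ x, pd i b x * pd j c x) 0 := by
    refine hasDerivAt_corr hbi hc j (Metric.cthickening 1 (tsupport (pd j c)))
      (hcs_pd hcs j).isCompact.cthickening ?_ ?_
    · intro t ht x hx
      refine mul_eq_zero_of_right _ (image_eq_zero_of_notMem_tsupport ?_)
      intro hx'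
      apply hx
      refine Metric.mem_cthickening_of_dist_le x _ 1 _ hx' ?_
      simp only [dist_self_add_right, norm_smul]
      simp at ht ⊢
      linarith
    · exact (hbi.mul hc.continuous).integrable_of_hasCompactSupport hcs.mul_left
  have h3 : ∀ t : ℝ, ∫ x, pd i c x * b (x + t • e) = - ∫ x, pd i b x * c (x + (-t) • e) := by
    intro t
    have hbt : ContDiff ℝ 1 (fun x => b (x + t • e)) := hb.comp (contDiff_id.add contDiff_const)
    have hz := integral_pd_eq_zero (hc.mul hbt) hcs.mul_right i
    have hpt : ∀ x, pd i (fun x => b (x + t • e)) x = pd i b (x + t • e) := by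
      intro x
      simp only [pd]
      rw [fderiv_comp_add_right]
    have hz' : ∫ x, (pd i c x * b (x + t • e) + c x * pd i b (x + t • e)) = 0 := by
      rw [← hz]
      congr 1
      funext x
      rw [← hpt]
      exact (pd_mul hc hbt i x).symm
    have hbtc := hbt.continuous
    rw [integral_add] at hz'
    · have hs := MeasureTheory.integral_add_right_eq_self
        (μ := (volume : Measure (EuclideanSpace ℝ (Fin n))))
        (fun x => pd i b x * c (x + (-t) • e)) (t • e)
      have hs' : ∫ x, c x * pd i b (x + t • e) = ∫ x, pd i b x * c (x + (-t) • e) := by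
        rw [← hs]
        congr 1
        funext x
        simp [mul_comm]
      linarith
    · exact (hci.mul hbtc).integrable_of_hasCompactSupport (hcs_pd hcs i).mul_right
    · exact (hc.continuous.mul (by fun_prop)).integrable_of_hasCompactSupport hcs.mul_right
  have h4 : HasDerivAt (fun t : ℝ => - ∫ x, pd i b x * c (x + (-t) • e))
      (∫ x, pd i b x * pd j c x) 0 := by
    have h2' : HasDerivAt (fun t : ℝ => ∫ x, pd i b x * c (x + t • e))
      (∫ x, pd i b x * pd j c x) (-0) := by simpa using h2
    have := (h2'.scomp (0:ℝ) (hasDerivAt_neg (0:ℝ))).fun_neg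
    simpa [Function.comp_def] using this
  have h5 := h1.unique (by
    have : (fun t : ℝ => ∫ x, pd i c x * b (x + t • e)) =
      (fun t : ℝ => - ∫ x, pd i b x * c (x + (-t) • e)) := funext h3
    rw [this]; exact h4)
  rw [h5]
  congr 1
  funext x
  ring

end helpers

section global
variable {n : ℕ}

lemma int_cc {f g : EuclideanSpace ℝ (Fin n) → ℝ} (hf : Continuous f) (hg : Continuous g)
    (hc : HasCompactSupport g) : Integrable (fun x => f x * g x) :=
  (hf.mul hg).integrable_of_hasCompactSupport hc.mul_left

/-- The pointwise algebraic inequality. -/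
lemma pointwise_ineq (hn : 0 < n) (h : Fin n → Fin n → ℝ) (p : Fin n → ℝ) (s : ℝ) :
    0 ≤ (∑ i, ∑ j, h i j ^ 2) + 2 * s * (∑ i, ∑ j, p i * p j * h i j)
      + s ^ 2 * (∑ i, p i ^ 2) ^ 2 - ((∑ i, h i i) + s * ∑ i, p i ^ 2) ^ 2 / n := by
  have hn' : (0 : ℝ) < n := by exact_mod_cast hn
  have h1 := sq_sum_le_card_mul_sum_sq (s := Finset.univ)
    (f := fun i => h i i + s * p i ^ 2)
  simp only [Finset.card_univ, Fintype.card_fin] at h1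
  have h2 : ∑ i, (h i i + s * p i ^ 2) ^ 2 ≤ ∑ i, ∑ j, (h i j + s * (p i * p j)) ^ 2 := by
    refine Finset.sum_le_sum fun i _ => ?_
    have := Finset.single_le_sum (f := fun j => (h i j + s * (p i * p j)) ^ 2)
      (fun j _ => sq_nonneg _) (Finset.mem_univ i)
    simpa [sq] using this
  have h3 : ∑ i, ∑ j, (h i j + s * (p i * p j)) ^ 2 =
      (∑ i, ∑ j, h i j ^ 2) + 2 * s * (∑ i, ∑ j, p i * p j * h i j)
      + s ^ 2 * (∑ i, p i ^ 2) ^ 2 := by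
    rw [sq (∑ i, p i ^ 2), Finset.sum_mul_sum]
    simp only [Finset.mul_sum, ← Finset.sum_add_distrib]
    refine Finset.sum_congr rfl fun i _ => Finset.sum_congr rfl fun j _ => ?_
    ring
  have h4 : ∑ i, (h i i + s * p i ^ 2) = (∑ i, h i i) + s * ∑ i, p i ^ 2 := by
    rw [Finset.sum_add_distrib, Finset.mul_sum]
  rw [h4] at h1
  rw [← h3, sub_nonneg, div_le_iff₀ hn']
  nlinarith

variable {u φ : EuclideanSpace ℝ (Fin n) → ℝ}

lemma global_T1 (hu : ContDiff ℝ 2 u) (h0 : ∀ x, 0 < u x) (r : ℝ) (hφ : ContDiff ℝ 2 φ)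
    (hc : HasCompactSupport φ) :
    let S := fun x => ∑ i, pd i u x ^ 2
    let B := fun x => ∑ i, pd i u x * pd i φ x
    let L := fun x => ∑ i, pd i (pd i u) x
    let W := fun x => ∑ i, ∑ j, pd i u x * pd j u x * pd i (pd j u) x
    let V := fun x => ∑ i, ∑ j, pd i u x * pd j φ x * pd i (pd j u) x
    let K := fun x => ∑ i, ∑ j, pd i (pd j u) x ^ 2
    let T := fun x => (r * u x ^ (r - 1) * φ x * S x + u x ^ r * B x + u x ^ r * φ x * L x) * L x
      - (r * u x ^ (r - 1) * φ x * W x + u x ^ r * V x + u x ^ r * φ x * K x)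
    Integrable T ∧ ∫ x, T x = 0 := by
  intro S B L W V K T
  have hu1 : ContDiff ℝ 1 u := hu.of_le (by norm_num)
  have hφ1 : ContDiff ℝ 1 φ := hφ.of_le (by norm_num)
  have hur : ContDiff ℝ 1 (fun x => u x ^ r) := hu1.rpow_const_of_ne fun x => (h0 x).ne'
  have hψ : ContDiff ℝ 1 (fun x => u x ^ r * φ x) := hur.mul hφ1
  have hcd : ∀ i, ContDiff ℝ 1 (fun x => (u x ^ r * φ x) * pd i u x) :=
    fun i => hψ.mul (contDiff_pd hu i)
  have hcs : ∀ i, HasCompactSupport (fun x => (u x ^ r * φ x) * pd i u x) :=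
    fun i => (hc.mul_left).mul_right
  have hpd : ∀ i j x, pd j (fun x => (u x ^ r * φ x) * pd i u x) x =
      (r * u x ^ (r - 1) * pd j u x * φ x + u x ^ r * pd j φ x) * pd i u x
        + u x ^ r * φ x * pd j (pd i u) x := by
    intro i j x
    rw [pd_mul hψ (contDiff_pd hu i), pd_mul hur hφ1, pd_rpow hu1 h0]
  have hT : T = fun x => ∑ i, ∑ j, (pd i (fun x => (u x ^ r * φ x) * pd i u x) x * pd j (pd j u) x
      - pd j (fun x => (u x ^ r * φ x) * pd i u x) x * pd i (pd j u) x) := by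
    funext x
    simp only [hpd, T, S, B, L, W, V, K]
    simp only [Finset.sum_sub_distrib]
    congr 1
    · rw [← Finset.sum_mul_sum]
      congr 1
      simp only [Finset.mul_sum, ← Finset.sum_add_distrib]
      refine Finset.sum_congr rfl fun i _ => ?_
      ring
    · simp only [Finset.mul_sum, ← Finset.sum_add_distrib]
      refine Finset.sum_congr rfl fun i _ => Finset.sum_congr rfl fun j _ => ?_
      rw [pd_symm hu j i]
      ring
  have hi1 : ∀ i j k l, Integrable (fun x =>
      pd j (fun x => (u x ^ r * φ x) * pd i u x) x * pd k (pd l u) x) := fun i j k l =>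
    ((continuous_pd (hcd i) j).mul (continuous_pd (contDiff_pd hu l) k)).integrable_of_hasCompactSupport
      (hcs_pd (hcs i) j).mul_right
  rw [hT]
  have hi2 : ∀ i j, Integrable (fun x =>
      (pd i (fun x => (u x ^ r * φ x) * pd i u x) x * pd j (pd j u) x
      - pd j (fun x => (u x ^ r * φ x) * pd i u x) x * pd i (pd j u) x)) :=
    fun i j => (hi1 i i j j).sub (hi1 i j i j)
  refine ⟨integrable_finsetSum _ fun i _ => integrable_finsetSum _ fun j _ => hi2 i j, ?_⟩
  rw [integral_finsetSum _ fun i _ => integrable_finsetSum _ fun j _ => hi2 i j]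
  refine Finset.sum_eq_zero fun i _ => ?_
  rw [integral_finsetSum _ fun j _ => hi2 i j]
  refine Finset.sum_eq_zero fun j _ => ?_
  rw [integral_sub (hi1 i i j j) (hi1 i j i j), sub_eq_zero]
  exact cross (contDiff_pd hu j) (hcd i) (hcs i) i j

lemma contDiff_S (hu : ContDiff ℝ 2 u) : ContDiff ℝ 1 (fun x => ∑ i, pd i u x ^ 2) :=
  ContDiff.sum fun i _ => (contDiff_pd hu i).pow 2

lemma global_T2 (hu : ContDiff ℝ 2 u) (h0 : ∀ x, 0 < u x) (r : ℝ) (hφ : ContDiff ℝ 2 φ)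
    (hc : HasCompactSupport φ) :
    let S := fun x => ∑ i, pd i u x ^ 2
    let B := fun x => ∑ i, pd i u x * pd i φ x
    let V := fun x => ∑ i, ∑ j, pd i u x * pd j φ x * pd i (pd j u) x
    let T := fun x => r * u x ^ (r - 1) * S x * B x + 2 * u x ^ r * V x
      + u x ^ r * S x * (∑ i, pd i (pd i φ) x)
    Integrable T ∧ ∫ x, T x = 0 := by
  intro S B V T
  have hu1 : ContDiff ℝ 1 u := hu.of_le (by norm_num)
  have hur : ContDiff ℝ 1 (fun x => u x ^ r) := hu1.rpow_const_of_ne fun x => (h0 x).ne'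
  have hS := contDiff_S hu
  have hcd : ∀ i, ContDiff ℝ 1 (fun x => (u x ^ r * S x) * pd i φ x) :=
    fun i => (hur.mul hS).mul (contDiff_pd hφ i)
  have hcs : ∀ i, HasCompactSupport (fun x => (u x ^ r * S x) * pd i φ x) :=
    fun i => (hcs_pd hc i).mul_left
  have hT : T = fun x => ∑ i, pd i (fun x => (u x ^ r * S x) * pd i φ x) x := by
    funext x
    simp only [T, V]
    have : ∀ i, pd i (fun x => (u x ^ r * S x) * pd i φ x) x =
        r * u x ^ (r - 1) * S x * (pd i u x * pd i φ x)
        + 2 * u x ^ r * (∑ j, pd j u x * pd i φ x * pd j (pd i u) x)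
        + u x ^ r * S x * pd i (pd i φ) x := by
      intro i
      rw [pd_mul (hur.mul hS) (contDiff_pd hφ i), pd_mul hur hS, pd_rpow hu1 h0, pd_sumsq hu]
      simp only [pd_symm hu i]
      have e : (∑ j, pd j u x * pd i φ x * pd j (pd i u) x) =
        (∑ j, pd j u x * pd j (pd i u) x) * pd i φ x := by
        rw [Finset.sum_mul]
        exact Finset.sum_congr rfl fun j _ => by ring
      rw [e, ← Finset.mul_sum]
      ring
    simp only [this, Finset.sum_add_distrib, ← Finset.mul_sum]
    rw [Finset.sum_comm]
  rw [hT]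
  have hi : ∀ i, Integrable (fun x => pd i (fun x => (u x ^ r * S x) * pd i φ x) x) := fun i =>
    (continuous_pd (hcd i) i).integrable_of_hasCompactSupport (hcs_pd (hcs i) i)
  refine ⟨integrable_finsetSum _ fun i _ => hi i, ?_⟩
  rw [integral_finsetSum _ fun i _ => hi i]
  exact Finset.sum_eq_zero fun i _ => integral_pd_eq_zero (hcd i) (hcs i) i

lemma global_T3 (hu : ContDiff ℝ 2 u) (h0 : ∀ x, 0 < u x) (r : ℝ) (hφ : ContDiff ℝ 2 φ)
    (hc : HasCompactSupport φ) :
    let S := fun x => ∑ i, pd i u x ^ 2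
    let B := fun x => ∑ i, pd i u x * pd i φ x
    let L := fun x => ∑ i, pd i (pd i u) x
    let W := fun x => ∑ i, ∑ j, pd i u x * pd j u x * pd i (pd j u) x
    let T := fun x => (r - 1) * u x ^ (r - 2) * φ x * S x ^ 2 + u x ^ (r - 1) * S x * B x
      + 2 * u x ^ (r - 1) * φ x * W x + u x ^ (r - 1) * φ x * S x * L x
    Integrable T ∧ ∫ x, T x = 0 := by
  intro S B L W T
  have hu1 : ContDiff ℝ 1 u := hu.of_le (by norm_num)
  have hφ1 : ContDiff ℝ 1 φ := hφ.of_le (by norm_num)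
  have hur : ContDiff ℝ 1 (fun x => u x ^ (r - 1)) := hu1.rpow_const_of_ne fun x => (h0 x).ne'
  have hS : ContDiff ℝ 1 S := contDiff_S hu
  have hcd : ∀ i, ContDiff ℝ 1 (fun x => ((u x ^ (r - 1) * φ x) * S x) * pd i u x) :=
    fun i => ((hur.mul hφ1).mul hS).mul (contDiff_pd hu i)
  have hcs : ∀ i, HasCompactSupport (fun x => ((u x ^ (r - 1) * φ x) * S x) * pd i u x) :=
    fun i => ((hc.mul_left).mul_right).mul_right
  have hT : T = fun x => ∑ i, pd i (fun x => ((u x ^ (r - 1) * φ x) * S x) * pd i u x) x := by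
    funext x
    simp only [T, W]
    have : ∀ i, pd i (fun x => ((u x ^ (r - 1) * φ x) * S x) * pd i u x) x =
        (r - 1) * u x ^ (r - 2) * φ x * S x * (pd i u x ^ 2)
        + u x ^ (r - 1) * S x * (pd i u x * pd i φ x)
        + 2 * u x ^ (r - 1) * φ x * (∑ j, pd i u x * pd j u x * pd i (pd j u) x)
        + u x ^ (r - 1) * φ x * S x * pd i (pd i u) x := by
      intro i
      rw [pd_mul ((hur.mul hφ1).mul hS) (contDiff_pd hu i), pd_mul (hur.mul hφ1) hS,
        pd_mul hur hφ1, pd_rpow hu1 h0, pd_sumsq hu]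
      have e : (∑ j, pd i u x * pd j u x * pd i (pd j u) x) =
        (∑ j, pd j u x * pd i (pd j u) x) * pd i u x := by
        rw [Finset.sum_mul]
        exact Finset.sum_congr rfl fun j _ => by ring
      rw [e, ← Finset.mul_sum, show r - 1 - 1 = r - 2 by ring]
      ring
    simp only [this, Finset.sum_add_distrib, ← Finset.mul_sum]
    simp only [S, B, L]
    ring
  rw [hT]
  have hi : ∀ i, Integrable (fun x => pd i (fun x => ((u x ^ (r - 1) * φ x) * S x) * pd i u x) x) :=
    fun i => (continuous_pd (hcd i) i).integrable_of_hasCompactSupport (hcs_pd (hcs i) i)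
  refine ⟨integrable_finsetSum _ fun i _ => hi i, ?_⟩
  rw [integral_finsetSum _ fun i _ => hi i]
  exact Finset.sum_eq_zero fun i _ => integral_pd_eq_zero (hcd i) (hcs i) i

lemma integral_lin_comb {f1 f2 f3 f4 f5 f6 f7 f8 f9 : EuclideanSpace ℝ (Fin n) → ℝ}
    (h1 : Integrable f1) (h2 : Integrable f2) (h3 : Integrable f3) (h4 : Integrable f4)
    (h5 : Integrable f5) (h6 : Integrable f6) (h7 : Integrable f7) (h8 : Integrable f8)
    (h9 : Integrable f9) (a1 a2 a3 a4 a5 a6 a7 a8 a9 : ℝ) :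
    ∫ x, (a1 * f1 x + a2 * f2 x + a3 * f3 x + a4 * f4 x + a5 * f5 x + a6 * f6 x + a7 * f7 x
      + a8 * f8 x + a9 * f9 x) =
    a1 * (∫ x, f1 x) + a2 * (∫ x, f2 x) + a3 * (∫ x, f3 x) + a4 * (∫ x, f4 x) + a5 * (∫ x, f5 x)
      + a6 * (∫ x, f6 x) + a7 * (∫ x, f7 x) + a8 * (∫ x, f8 x) + a9 * (∫ x, f9 x) := by
  have g1 := h1.const_mul a1
  have g2 := g1.fun_add (h2.const_mul a2)
  have g3 := g2.fun_add (h3.const_mul a3)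
  have g4 := g3.fun_add (h4.const_mul a4)
  have g5 := g4.fun_add (h5.const_mul a5)
  have g6 := g5.fun_add (h6.const_mul a6)
  have g7 := g6.fun_add (h7.const_mul a7)
  have g8 := g7.fun_add (h8.const_mul a8)
  rw [integral_add g8 (h9.const_mul a9), integral_add g7 (h8.const_mul a8),
    integral_add g6 (h7.const_mul a7), integral_add g5 (h6.const_mul a6),
    integral_add g4 (h5.const_mul a5), integral_add g3 (h4.const_mul a4),
    integral_add g2 (h3.const_mul a3), integral_add g1 (h2.const_mul a2)]
  simp only [integral_const_mul]

lemma global_ineq (hn : 0 < n) (hu : ContDiff ℝ 2 u) (h0 : ∀ x, 0 < u x) (r k : ℝ)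
    (hφ : ContDiff ℝ 2 φ) (hc : HasCompactSupport φ) (hφ0 : ∀ x, 0 ≤ φ x) :
    (-(((n : ℝ) - 1) / n) * k ^ 2 + k * (r - 1) - r * (r - 1) / 2) *
        (∫ x, u x ^ (r - 2) * ‖gradient u x‖ ^ 4 * φ x)
      + ((3 / 2) * r - ((n : ℝ) + 2) / n * k) *
        (∫ x, u x ^ (r - 1) * ‖gradient u x‖ ^ 2 * (-lap u x) * φ x)
      - ((n : ℝ) - 1) / n * (∫ x, u x ^ r * (-lap u x) ^ 2 * φ x)
    ≤ (1 / 2) * (∫ x, u x ^ r * ‖gradient u x‖ ^ 2 * lap φ x)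
      + (∫ x, u x ^ r * lap u x * ⟪gradient u x, gradient φ x⟫_ℝ)
      + (r - k) *
        (∫ x, u x ^ (r - 1) * ‖gradient u x‖ ^ 2 *
          ⟪gradient u x, gradient φ x⟫_ℝ) := by
  have hn' : (n : ℝ) ≠ 0 := by exact_mod_cast hn.ne'
  have h4 : ∀ x, ‖gradient u x‖ ^ 4 = (‖gradient u x‖ ^ 2) ^ 2 := fun x => by ring
  simp only [h4, norm_gradient_sq, inner_gradient_pd, lap_eq_s3]
  obtain ⟨i1, e1⟩ := global_T1 hu h0 r hφ hc
  obtain ⟨i2, e2⟩ := global_T2 hu h0 r hφ hc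
  obtain ⟨i3, e3⟩ := global_T3 hu h0 r hφ hc
  have hu1 : ContDiff ℝ 1 u := hu.of_le (by norm_num)
  have hur : ∀ p : ℝ, Continuous (fun x => u x ^ p) := fun p =>
    (hu1.rpow_const_of_ne fun x => (h0 x).ne').continuous
  have hpu : ∀ i, Continuous (pd i u) := fun i => (contDiff_pd hu i).continuous
  have hpuu : ∀ i j, Continuous (pd i (pd j u)) := fun i j => continuous_pd (contDiff_pd hu j) i
  have hpφ : ∀ i, Continuous (pd i φ) := fun i => (contDiff_pd hφ i).continuous
  have hpφφ : ∀ i j, Continuous (pd i (pd j φ)) := fun i j => continuous_pd (contDiff_pd hφ j) i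
  have hS : Continuous (fun x => ∑ i, pd i u x ^ 2) := (contDiff_S hu).continuous
  have hL : Continuous (fun x => ∑ i, pd i (pd i u) x) := continuous_finsetSum _ fun i _ => hpuu i i
  have hLφ : Continuous (fun x => ∑ i, pd i (pd i φ) x) :=
    continuous_finsetSum _ fun i _ => hpφφ i i
  have hB : Continuous (fun x => ∑ i, pd i u x * pd i φ x) :=
    continuous_finsetSum _ fun i _ => (hpu i).mul (hpφ i)
  have hφz : ∀ x, x ∉ tsupport φ → φ x = 0 := fun x hx => image_eq_zero_of_notMem_tsupport hx
  have hpz : ∀ i x, x ∉ tsupport φ → pd i φ x = 0 := fun i x hx =>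
    image_eq_zero_of_notMem_tsupport fun h => hx (tsupport_fderiv_apply_subset ℝ _ h)
  have hppz : ∀ i x, x ∉ tsupport φ → pd i (pd i φ) x = 0 := fun i x hx =>
    image_eq_zero_of_notMem_tsupport fun h => hx (tsupport_fderiv_apply_subset ℝ _
      (tsupport_fderiv_apply_subset ℝ _ h))
  have hcB : HasCompactSupport (fun x => ∑ i, pd i u x * pd i φ x) :=
    HasCompactSupport.intro hc fun x hx => by simp [hpz _ x hx]
  have hcL : HasCompactSupport (fun x => ∑ i, pd i (pd i φ) x) :=
    HasCompactSupport.intro hc fun x hx => by simp [hppz _ x hx]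
  have hφc := hφ.continuous
  have j1 := int_cc ((hur (r-2)).mul (hS.pow 2)) hφc hc
  have j2 := int_cc (((hur (r-1)).mul hS).mul hL.neg) hφc hc
  have j3 := int_cc ((hur r).mul (hL.neg.pow 2)) hφc hc
  have j4 := int_cc ((hur r).mul hS) hLφ hcL
  have j5 := int_cc ((hur r).mul hL) hB hcB
  have j6 := int_cc ((hur (r-1)).mul hS) hB hcB
  have key := integral_lin_comb j1 j2 j3 j4 j5 j6 i1 i2 i3
    (-(-(((n : ℝ) - 1) / n) * k ^ 2 + k * (r - 1) - r * (r - 1) / 2))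
    (-((3 / 2) * r - ((n : ℝ) + 2) / n * k)) (((n : ℝ) - 1) / n) (1 / 2) 1 (r - k)
    (-1) (-(1 / 2)) (k - r / 2)
  rw [e1, e2, e3] at key
  simp only [Pi.mul_apply, Pi.pow_apply, Pi.neg_apply] at key
  have hnn := key.symm.ge.trans' (integral_nonneg (fun x => ?_))
  · linarith
  · have hux := h0 x
    have p1 : u x ^ (r - 1) = u x ^ (r - 2) * u x := by
      rw [← Real.rpow_add_one hux.ne']; congr 1; ring
    have p2 : u x ^ r = u x ^ (r - 2) * u x * u x := by
      rw [← Real.rpow_add_one hux.ne', ← Real.rpow_add_one hux.ne']; congr 1; ring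
    have hp := pointwise_ineq hn (fun i j => pd i (pd j u) x) (fun i => pd i u x) (k / u x)
    have hq := mul_nonneg (mul_nonneg (Real.rpow_nonneg hux.le r) (hφ0 x)) hp
    refine hq.trans_eq ?_
    simp only [p1, p2]
    generalize (∑ i, pd i u x ^ 2) = S
    generalize (∑ i, pd i u x * pd i φ x) = B
    generalize (∑ i, pd i (pd i u) x) = L
    generalize (∑ i, pd i (pd i φ) x) = M
    generalize (∑ i, ∑ j, pd i u x * pd j u x * pd i (pd j u) x) = W
    generalize (∑ i, ∑ j, pd i u x * pd j φ x * pd i (pd j u) x) = V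
    generalize (∑ i, ∑ j, pd i (pd j u) x ^ 2) = K
    generalize u x ^ (r - 2) = A
    have := hux.ne'
    field_simp
    ring

end global

theorem obata_type_inequality (n : ℕ) (hn : 0 < n)
    (Ω : Set (EuclideanSpace ℝ (Fin n))) (hΩ : IsOpen Ω)
    (u : EuclideanSpace ℝ (Fin n) → ℝ) (hu : ContDiffOn ℝ 2 u Ω)
    (hu0 : ∀ x ∈ Ω, 0 < u x) (r k : ℝ) (hk : k ≠ -1)
    (φ : EuclideanSpace ℝ (Fin n) → ℝ) (hφ : ContDiff ℝ 2 φ)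
    (hφc : HasCompactSupport φ) (hφΩ : tsupport φ ⊆ Ω) (hφ0 : ∀ x, 0 ≤ φ x) :
    (-(((n : ℝ) - 1) / n) * k ^ 2 + k * (r - 1) - r * (r - 1) / 2) *
        (∫ x in Ω, u x ^ (r - 2) * ‖gradient u x‖ ^ 4 * φ x)
      + ((3 / 2) * r - ((n : ℝ) + 2) / n * k) *
        (∫ x in Ω, u x ^ (r - 1) * ‖gradient u x‖ ^ 2 * (-lap u x) * φ x)
      - ((n : ℝ) - 1) / n * (∫ x in Ω, u x ^ r * (-lap u x) ^ 2 * φ x)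
    ≤ (1 / 2) * (∫ x in Ω, u x ^ r * ‖gradient u x‖ ^ 2 * lap φ x)
      + (∫ x in Ω, u x ^ r * lap u x * ⟪gradient u x, gradient φ x⟫_ℝ)
      + (r - k) *
        (∫ x in Ω, u x ^ (r - 1) * ‖gradient u x‖ ^ 2 *
          ⟪gradient u x, gradient φ x⟫_ℝ) := by
  obtain ⟨χ, hχ0, hχ1, hχI⟩ := exists_contMDiffMap_zero_one_nhds_of_isClosed (n := 2)
    (modelWithCornersSelf ℝ (EuclideanSpace ℝ (Fin n))) hΩ.isClosed_compl
    (isClosed_tsupport φ) (Set.disjoint_left.2 fun x hx hx' => hx (hφΩ hx'))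
  have hχ : ContDiff ℝ 2 χ := χ.contMDiff.contDiff
  set w : EuclideanSpace ℝ (Fin n) → ℝ := fun x => χ x * u x + (1 - χ x) with hw
  have hw2 : ContDiff ℝ 2 w := by
    rw [contDiff_iff_contDiffAt]
    intro x
    by_cases hx : x ∈ Ω
    · have := hu.contDiffAt (hΩ.mem_nhds hx)
      exact (hχ.contDiffAt.mul this).add (contDiffAt_const.sub hχ.contDiffAt)
    · have h1 : ∀ᶠ y in nhds x, χ y = 0 := (eventually_nhdsSet_iff_forall.1 hχ0) x hx
      have h2 : w =ᶠ[nhds x] fun _ => 1 := by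
        filter_upwards [h1] with y hy
        simp [hw, hy]
      exact contDiffAt_const.congr_of_eventuallyEq h2
  have hw0 : ∀ x, 0 < w x := by
    intro x
    obtain ⟨ha, hb⟩ := hχI x
    by_cases hx : x ∈ Ω
    · have := hu0 x hx
      rcases ha.eq_or_lt with h | h
      · simp [hw, ← h]
      · have : 0 < χ x * u x := mul_pos h this
        simp only [hw]; linarith
    · have : χ x = 0 := hχ0.self_of_nhdsSet x hx
      simp [hw, this]
  have hev : ∀ x ∈ tsupport φ, u =ᶠ[nhds x] w := by
    intro x hx
    filter_upwards [(eventually_nhdsSet_iff_forall.1 hχ1) x hx] with y hy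
    simp [hw, hy]
  have hux : ∀ x ∈ tsupport φ, u x = w x := fun x hx => (hev x hx).eq_of_nhds
  have hpd : ∀ x ∈ tsupport φ, ∀ i, pd i u =ᶠ[nhds x] pd i w := by
    intro x hx i
    filter_upwards [(hev x hx).fderiv (𝕜 := ℝ)] with y hy
    simp only [pd, hy]
  have hgr : ∀ x ∈ tsupport φ, gradient u x = gradient w x := by
    intro x hx
    ext i
    rw [gradient_apply_pd, gradient_apply_pd, (hpd x hx i).eq_of_nhds]
  have hlap : ∀ x ∈ tsupport φ, lap u x = lap w x := by
    intro x hx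
    rw [lap_eq_s3, lap_eq_s3]
    refine Finset.sum_congr rfl fun i _ => ?_
    rw [pd, (hpd x hx i).fderiv_eq, pd]
  have hφz : ∀ x, x ∉ tsupport φ → φ x = 0 := fun x hx => image_eq_zero_of_notMem_tsupport hx
  have hpz : ∀ i x, x ∉ tsupport φ → pd i φ x = 0 := fun i x hx =>
    image_eq_zero_of_notMem_tsupport fun h => hx (tsupport_fderiv_apply_subset ℝ _ h)
  have hppz : ∀ i x, x ∉ tsupport φ → pd i (pd i φ) x = 0 := fun i x hx =>
    image_eq_zero_of_notMem_tsupport fun h => hx (tsupport_fderiv_apply_subset ℝ _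
      (tsupport_fderiv_apply_subset ℝ _ h))
  have hgz : ∀ x, x ∉ tsupport φ → gradient φ x = 0 := by
    intro x hx
    ext i
    rw [gradient_apply_pd, hpz i x hx]
    rfl
  have hlz : ∀ x, x ∉ tsupport φ → lap φ x = 0 := by
    intro x hx
    rw [lap_eq_s3]
    exact Finset.sum_eq_zero fun i _ => hppz i x hx
  have tr : ∀ f g : EuclideanSpace ℝ (Fin n) → ℝ, (∀ x ∈ tsupport φ, f x = g x) →
      (∀ x, x ∉ tsupport φ → f x = 0) → (∀ x, x ∉ tsupport φ → g x = 0) →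
      ∫ x in Ω, f x = ∫ x, g x := by
    intro f g h1 h2 h3
    rw [setIntegral_eq_integral_of_forall_compl_eq_zero
      (fun x hx => h2 x fun h => hx (hφΩ h))]
    congr 1
    funext x
    by_cases hx : x ∈ tsupport φ
    · exact h1 x hx
    · rw [h2 x hx, h3 x hx]
  have main := global_ineq hn hw2 hw0 r k hφ hφc hφ0
  rw [tr _ (fun x => w x ^ (r - 2) * ‖gradient w x‖ ^ 4 * φ x)
      (fun x hx => by rw [hux x hx, hgr x hx]) (fun x hx => by simp [hφz x hx])
      (fun x hx => by simp [hφz x hx]),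
    tr _ (fun x => w x ^ (r - 1) * ‖gradient w x‖ ^ 2 * (-lap w x) * φ x)
      (fun x hx => by rw [hux x hx, hgr x hx, hlap x hx]) (fun x hx => by simp [hφz x hx])
      (fun x hx => by simp [hφz x hx]),
    tr _ (fun x => w x ^ r * (-lap w x) ^ 2 * φ x)
      (fun x hx => by rw [hux x hx, hlap x hx]) (fun x hx => by simp [hφz x hx])
      (fun x hx => by simp [hφz x hx]),
    tr _ (fun x => w x ^ r * ‖gradient w x‖ ^ 2 * lap φ x)
      (fun x hx => by rw [hux x hx, hgr x hx]) (fun x hx => by simp [hlz x hx])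
      (fun x hx => by simp [hlz x hx]),
    tr _ (fun x => w x ^ r * lap w x * ⟪gradient w x, gradient φ x⟫_ℝ)
      (fun x hx => by rw [hux x hx, hgr x hx, hlap x hx]) (fun x hx => by simp [hgz x hx])
      (fun x hx => by simp [hgz x hx]),
    tr _ (fun x => w x ^ (r - 1) * ‖gradient w x‖ ^ 2 * ⟪gradient w x, gradient φ x⟫_ℝ)
      (fun x hx => by rw [hux x hx, hgr x hx]) (fun x hx => by simp [hgz x hx])
      (fun x hx => by simp [hgz x hx])]
  exact main
end

section
/- Let p, q > 0 and let r, s, θ ∈ ℝ with r ≠ −2. Let (u, v) be a positive classical solution of the Lane–Emden system −Δu = v^p, −Δv = u^q on ℝ^n. Then for every nonnegative φ ∈ C_c²(ℝ^n): ∫ u^r v^s |∇u|² φ ≥ (2θ/(r+2)) ∫ u^{r+q+2} v^{s−1} φ − (2θ/(r+2))(θ + s + θr/2 − 1) ∫ u^{r+2} v^{s−2} |∇v|² φ + I₃, where I₃ = −(2θ/(r+2)) ∫ u^{r+2} v^{s−1} (∇v·∇φ), all integrals being over ℝ^n. -/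
open MeasureTheory Real
open scoped InnerProductSpace

theorem inner_grad_eq {n : ℕ} (f g : EuclideanSpace ℝ (Fin n) → ℝ)
    (x : EuclideanSpace ℝ (Fin n)) :
    ∑ i : Fin n, fderiv ℝ f x (EuclideanSpace.single i 1) *
      fderiv ℝ g x (EuclideanSpace.single i 1) = ⟪gradient f x, gradient g x⟫_ℝ := by
  rw [← (EuclideanSpace.basisFun (Fin n) ℝ).sum_inner_mul_inner]
  refine Finset.sum_congr rfl fun i _ => ?_
  rw [real_inner_comm (gradient g x)]
  simp [gradient]

theorem cont_gradient {n : ℕ} {f : EuclideanSpace ℝ (Fin n) → ℝ} (hf : ContDiff ℝ 1 f) :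
    Continuous (gradient f) := by
  unfold gradient
  exact (LinearIsometryEquiv.continuous _).comp (hf.continuous_fderiv one_ne_zero)

theorem green_id {n : ℕ} (v g : EuclideanSpace ℝ (Fin n) → ℝ)
    (hv : ContDiff ℝ 2 v) (hg : ContDiff ℝ 1 g) (hgc : HasCompactSupport g) :
    ∫ x, ⟪gradient v x, gradient g x⟫_ℝ = ∫ x, -lap v x * g x := by
  have hd (i : Fin n) : ContDiff ℝ 1 (fun y => fderiv ℝ v y (EuclideanSpace.single i 1)) :=
    (hv.fderiv_right (m := 1) (by norm_num)).clm_apply contDiff_const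
  have hdd (i : Fin n) : Continuous (fun x => fderiv ℝ (fun y => fderiv ℝ v y
      (EuclideanSpace.single i 1)) x (EuclideanSpace.single i 1)) :=
    ((hd i).continuous_fderiv one_ne_zero).clm_apply continuous_const
  have hgd (i : Fin n) : Continuous (fun x => fderiv ℝ g x (EuclideanSpace.single i 1)) :=
    (hg.continuous_fderiv one_ne_zero).clm_apply continuous_const
  have i1 (i : Fin n) : Integrable (fun x => fderiv ℝ (fun y => fderiv ℝ v y
      (EuclideanSpace.single i 1)) x (EuclideanSpace.single i 1) * g x) :=
    ((hdd i).mul hg.continuous).integrable_of_hasCompactSupport hgc.mul_left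
  have i2 (i : Fin n) : Integrable (fun x => fderiv ℝ v x (EuclideanSpace.single i 1) *
      fderiv ℝ g x (EuclideanSpace.single i 1)) :=
    ((hd i).continuous.mul (hgd i)).integrable_of_hasCompactSupport
      ((hgc.fderiv_apply (𝕜 := ℝ) _).mul_left)
  have i3 (i : Fin n) : Integrable (fun x => fderiv ℝ v x (EuclideanSpace.single i 1) * g x) :=
    ((hd i).continuous.mul hg.continuous).integrable_of_hasCompactSupport hgc.mul_left
  have key (i : Fin n) := integral_mul_fderiv_eq_neg_fderiv_mul_of_integrable (i1 i) (i2 i) (i3 i)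
    (fun x _ => (hd i).differentiable one_ne_zero x) (fun x _ => hg.differentiable one_ne_zero x)
  simp_rw [← inner_grad_eq, lap, neg_mul, Finset.sum_mul]
  rw [integral_finsetSum _ (fun i _ => i2 i), integral_neg,
    integral_finsetSum _ (fun i _ => i1 i), ← Finset.sum_neg_distrib]
  exact Finset.sum_congr rfl fun i _ => key i

theorem int_lin3 {n : ℕ} (a b c : ℝ) (f g h : EuclideanSpace ℝ (Fin n) → ℝ)
    (hf : Integrable f) (hg : Integrable g) (hh : Integrable h) :
    ∫ x, (a * f x + b * g x + c * h x)
      = a * (∫ x, f x) + b * (∫ x, g x) + c * (∫ x, h x) := by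
  have h1 : Integrable (fun x => a * f x + b * g x) := (hf.const_mul a).add (hg.const_mul b)
  rw [integral_add h1 (hh.const_mul c), integral_add (hf.const_mul a) (hg.const_mul b),
    integral_const_mul, integral_const_mul, integral_const_mul]

theorem grad_test {n : ℕ} (a b : ℝ) (u v φ : EuclideanSpace ℝ (Fin n) → ℝ)
    (hu : ContDiff ℝ 2 u) (hv : ContDiff ℝ 2 v) (hφ : ContDiff ℝ 2 φ)
    (hu0 : ∀ x, 0 < u x) (hv0 : ∀ x, 0 < v x) (x : EuclideanSpace ℝ (Fin n)) :
    ⟪gradient v x, gradient (fun y => u y ^ a * v y ^ b * φ y) x⟫_ℝ =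
      a * (u x ^ (a - 1) * v x ^ b * ⟪gradient u x, gradient v x⟫_ℝ * φ x)
      + b * (u x ^ a * v x ^ (b - 1) * ‖gradient v x‖ ^ 2 * φ x)
      + u x ^ a * v x ^ b * ⟪gradient v x, gradient φ x⟫_ℝ := by
  have e (f : EuclideanSpace ℝ (Fin n) → ℝ) (w : EuclideanSpace ℝ (Fin n)) :
      ⟪w, gradient f x⟫_ℝ = fderiv ℝ f x w := by
    rw [real_inner_comm]; simp [gradient]
  have du := (hu.differentiable two_ne_zero x).hasFDerivAt.rpow_const (p := a)
    (Or.inl (hu0 x).ne')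
  have dv := (hv.differentiable two_ne_zero x).hasFDerivAt.rpow_const (p := b)
    (Or.inl (hv0 x).ne')
  have d := ((du.mul dv).mul (hφ.differentiable two_ne_zero x).hasFDerivAt).fderiv
  have d' : fderiv ℝ (fun y => u y ^ a * v y ^ b * φ y) x = _ := d
  rw [real_inner_comm (gradient v x) (gradient u x), ← real_inner_self_eq_norm_sq, e, e, e, e, d']
  simp
  ring

theorem estimates_picone (n : ℕ) (p q r s θ : ℝ) (hp : 0 < p) (hq : 0 < q)
    (hr : r ≠ -2)
    (u v : EuclideanSpace ℝ (Fin n) → ℝ)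
    (hu : ContDiff ℝ 2 u) (hv : ContDiff ℝ 2 v)
    (hu0 : ∀ x, 0 < u x) (hv0 : ∀ x, 0 < v x)
    (hue : ∀ x, -lap u x = v x ^ p) (hve : ∀ x, -lap v x = u x ^ q)
    (φ : EuclideanSpace ℝ (Fin n) → ℝ) (hφ : ContDiff ℝ 2 φ)
    (hφc : HasCompactSupport φ) (hφ0 : ∀ x, 0 ≤ φ x) :
    (∫ x, u x ^ r * v x ^ s * ‖gradient u x‖ ^ 2 * φ x)
    ≥ (2 * θ / (r + 2)) * (∫ x, u x ^ (r + q + 2) * v x ^ (s - 1) * φ x)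
      - (2 * θ / (r + 2)) * (θ + s + θ * r / 2 - 1) *
        (∫ x, u x ^ (r + 2) * v x ^ (s - 2) * ‖gradient v x‖ ^ 2 * φ x)
      + (-(2 * θ / (r + 2)) *
          (∫ x, u x ^ (r + 2) * v x ^ (s - 1) *
            ⟪gradient v x, gradient φ x⟫_ℝ)) := by
  have hu1 : ContDiff ℝ 1 u := hu.of_le (by norm_num)
  have hv1 : ContDiff ℝ 1 v := hv.of_le (by norm_num)
  have hφ1 : ContDiff ℝ 1 φ := hφ.of_le (by norm_num)
  have cu (a : ℝ) : ContDiff ℝ 1 (fun x => u x ^ a) :=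
    hu1.rpow_const_of_ne fun x => (hu0 x).ne'
  have cv (a : ℝ) : ContDiff ℝ 1 (fun x => v x ^ a) :=
    hv1.rpow_const_of_ne fun x => (hv0 x).ne'
  have gu := cont_gradient hu1
  have gv := cont_gradient hv1
  have gφ := cont_gradient hφ1
  have I1 : Integrable (fun x => u x ^ r * v x ^ s * ‖gradient u x‖ ^ 2 * φ x) :=
    ((((cu r).continuous.mul (cv s).continuous).mul (gu.norm.pow 2)).mul
      hφ.continuous).integrable_of_hasCompactSupport hφc.mul_left
  have IB : Integrable (fun x => u x ^ (r + 2) * v x ^ (s - 2) * ‖gradient v x‖ ^ 2 * φ x) :=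
    ((((cu _).continuous.mul (cv _).continuous).mul (gv.norm.pow 2)).mul
      hφ.continuous).integrable_of_hasCompactSupport hφc.mul_left
  have IA : Integrable (fun x => u x ^ (r + 1) * v x ^ (s - 1) *
      ⟪gradient u x, gradient v x⟫_ℝ * φ x) :=
    ((((cu _).continuous.mul (cv _).continuous).mul (gu.inner gv)).mul
      hφ.continuous).integrable_of_hasCompactSupport hφc.mul_left
  have hgc : HasCompactSupport (gradient φ) :=
    (hφc.fderiv (𝕜 := ℝ)).comp_left (map_zero _)
  have IC : Integrable (fun x => u x ^ (r + 2) * v x ^ (s - 1) *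
      ⟪gradient v x, gradient φ x⟫_ℝ) := by
    refine (((cu _).continuous.mul (cv _).continuous).mul
      (gv.inner gφ)).integrable_of_hasCompactSupport (HasCompactSupport.mul_left ?_)
    refine hgc.mono fun x hx hx0 => hx ?_
    simp only [hx0, inner_zero_right]
  have G := green_id v (fun y => u y ^ (r + 2) * v y ^ (s - 1) * φ y) hv
    (((cu _).mul (cv _)).mul hφ1) hφc.mul_left
  simp_rw [grad_test (r + 2) (s - 1) u v φ hu hv hφ hu0 hv0, hve] at G
  rw [show r + 2 - 1 = r + 1 by ring, show s - 1 - 1 = s - 2 by ring] at G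
  have L1 := int_lin3 (r + 2) (s - 1) 1 _ _ _ IA IB IC
  simp only [one_mul] at L1
  rw [L1] at G
  have E2 : ∫ x, u x ^ q * (u x ^ (r + 2) * v x ^ (s - 1) * φ x)
      = ∫ x, u x ^ (r + q + 2) * v x ^ (s - 1) * φ x := by
    refine integral_congr_ae (Filter.Eventually.of_forall fun x => ?_)
    simp only
    rw [show r + q + 2 = q + (r + 2) by ring, Real.rpow_add (hu0 x) q]
    ring
  rw [E2] at G
  have N : 0 ≤ ∫ x, (u x ^ r * v x ^ s * ‖gradient u x‖ ^ 2 * φ x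
      - 2 * θ * (u x ^ (r + 1) * v x ^ (s - 1) * ⟪gradient u x, gradient v x⟫_ℝ * φ x)
      + θ ^ 2 * (u x ^ (r + 2) * v x ^ (s - 2) * ‖gradient v x‖ ^ 2 * φ x)) := by
    refine integral_nonneg fun x => ?_
    have h : 0 ≤ u x ^ r * v x ^ (s - 2) * φ x *
        ‖v x • gradient u x - (θ * u x) • gradient v x‖ ^ 2 := by
      have := hu0 x; have := hv0 x; have := hφ0 x; positivity
    rw [norm_sub_sq_real, norm_smul, norm_smul, real_inner_smul_left, real_inner_smul_right,
      mul_pow, mul_pow, Real.norm_eq_abs, Real.norm_eq_abs, sq_abs, sq_abs] at h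
    have a1 : u x ^ (r + 1) = u x ^ r * u x := by rw [Real.rpow_add (hu0 x), Real.rpow_one]
    have a2 : u x ^ (r + 2) = u x ^ r * u x ^ 2 := by rw [Real.rpow_add (hu0 x), Real.rpow_two]
    have b1 : v x ^ (s - 1) = v x ^ (s - 2) * v x := by
      rw [show s - 1 = s - 2 + 1 by ring, Real.rpow_add (hv0 x), Real.rpow_one]
    have b2 : v x ^ s = v x ^ (s - 2) * v x ^ 2 := by
      rw [← Real.rpow_two, ← Real.rpow_add (hv0 x)]; congr 1; ring
    simp only [Pi.zero_apply]
    rw [a1, a2, b1, b2]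
    refine h.trans_eq ?_
    ring
  have L2 := int_lin3 1 (-(2 * θ)) (θ ^ 2) _ _ _ I1 IA IB
  simp only [one_mul, neg_mul, ← sub_eq_add_neg] at L2
  rw [L2] at N
  rw [← G, ge_iff_le, ← sub_nonneg]
  refine N.trans_eq ?_
  have : r + 2 ≠ 0 := fun h => hr (by linarith)
  field_simp
  ring
end
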